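/- Let $c$, $\mu$, $\varepsilon$ be fixed real numbers with $1 < c < \frac{17}{16}$, $0 < \mu < 1$, $\varepsilon > 0$, and set $\delta = \frac{17 - 16c}{32}$ and $\xi = \frac{16c - 5}{32}$. There exists a constant $C = C(c, \mu, \varepsilon) > 0$ such that for every real $X \geq 2$, with $D = X^{\delta}$ and $\Delta = X^{\xi - c}$, for every real $M \geq 3$, every sieve weight $\lambda$ of level $D$, and every real $\alpha$ with $\Delta \leq |\alpha| \leq M + 1$, one has $\left| \sum_{d \leq D} \lambda(d) \sum_{\substack{\mu X < n \leq X \\ n + 2 \equiv 0 \ (\mathrm{mod}\ d)}} \Lambda(n)\, e(\alpha n^c) \right| \leq C X^{\varepsilon} \left( X^{\frac{1}{3} + \frac{c}{2}} D M^{\frac{1}{2}} + X^{1 - \frac{c}{2}} \Delta^{-\frac{1}{2}} + X^{\frac{3}{4} + \frac{c}{6}} D^{\frac{2}{3}} M^{\frac{1}{6}} + X^{\frac{5}{6}} + X^{1 - \frac{c}{6}} D^{\frac{1}{3}} \Delta^{-\frac{1}{6}} + X^{1 - \frac{c}{4}} \Delta^{-\frac{1}{4}} \right)$. -/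

import Mathlib

/-!
The estimate is obtained from Vaughan's identity with both parameters equal to `X ^ (1 / 3)`
(`vaughan`), which splits the sum over primes into bilinear sums over pairs `(m, l)` with
`ml ∈ (mu X, X]` and `d ∣ ml + 2`. Since `λ` is supported on odd `d`, this divisibility forces `m`
and `l` to be coprime to `d`, so fixing one variable confines the other to a residue class
modulo `d`.

*Exponential sums.* Kusmin–Landau gives the second derivative test (`second_diff_test`). For
`β m ^ c` with `m` in a progression of difference `q ≤ Y` inside `(κ Y, Y]` it yields the bound
`√|β| Y ^ (c / 2) + Y ^ (1 - c / 2) / (q √|β|)` up to a constant (`ap_vdc`).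

*Type I* (`typeI`): when `m ≤ X ^ (1 / 3)` and the weight in `l` is `1` or `log`, the sum over `l` is
estimated by `ap_vdc` with `β = α m ^ c`, and the bound is summed over `m` and `d`. This gives
`D X ^ (1 / 3 + c / 2) √|α| + X ^ (1 - c / 2) / √|α|` up to logarithms.

*Type II* (`typeII`): when `m` lies between `X ^ (1 / 3)` and `X ^ (2 / 3)`, both variables are
localised dyadically, to `(κ P, P]` and `(κ Q, Q]` with `Q ≤ P` and `P Q = 2 X`. The range of the
shorter variable is cut into windows of length `H`, and Cauchy–Schwarz is applied in each window.
Opening the square leaves sums of `e (α (l₁ ^ c - l₂ ^ c) m ^ c)` over `m` in a progression modulo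
`lcm d₁ d₂`. The diagonal `l₁ = l₂` is bounded by `∑ 1 / lcm d₁ d₂ ≤ (1 + log X) ^ 3`, and `ap_vdc`
handles the rest because `|l₁ ^ c - l₂ ^ c|` is comparable with `Q ^ (c - 1) |l₁ - l₂|`.
For `D = X ^ ((17 - 16 c) / 32)` the optimal window is `H = X ^ (c / 3 - 5 / 24) |α| ^ (-1 / 3)`,
or `Q` if that is smaller, and the result is `EII`. If this `H` is below `1`, then `X ≤ EII`
and the trivial bound is enough (`X_le_EII`, `TT_trivial`).

The combined estimate `main_raw` depends on `α` only through powers of `|α|`. The stated bound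
follows by inserting `|α| ≤ M + 1 ≤ 2 M` in the positive powers and `|α| ≥ Δ` in the negative ones,
and by absorbing the logarithms in `X ^ ε`.
-/

open scoped ArithmeticFunction

/-- `e(t) = e^{2πit}`. -/
noncomputable def e (t : ℝ) : ℂ := Complex.exp (2 * Real.pi * Complex.I * t)

/-- A sieve weight of level `D`. -/
def IsSieveWeight (D : ℝ) (lam : ℕ → ℝ) : Prop :=
  (∀ d : ℕ, |lam d| ≤ 1) ∧ ∀ d : ℕ, (D < (d : ℝ) ∨ 2 ∣ d ∨ ¬ Squarefree d) → lam d = 0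

/-! ### The Kusmin–Landau inequality and the second derivative test -/

lemma e_eq (t : ℝ) : e t = Complex.exp ((2 * Real.pi * t : ℝ) * Complex.I) := by
  unfold e; congr 1; push_cast; ring

lemma norm_e (t : ℝ) : ‖e t‖ = 1 := by
  rw [e_eq]; exact Complex.norm_exp_ofReal_mul_I _

lemma e_add (s t : ℝ) : e (s + t) = e s * e t := by
  simp only [e_eq]; rw [← Complex.exp_add]; congr 1; push_cast; ring

lemma e_neg (t : ℝ) : e (-t) = (starRingEnd ℂ) (e t) := by
  simp only [e_eq]; rw [← Complex.exp_conj]; congr 1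
  rw [map_mul, Complex.conj_ofReal, Complex.conj_I]; push_cast; ring

lemma e_sub_int (t : ℝ) (j : ℤ) : e (t - j) = e t := by
  simp only [e_eq]
  rw [Complex.exp_eq_exp_iff_exists_int]
  exact ⟨-j, by push_cast; ring⟩

/-- For `t` not an integer, `kc t` is the inverse of `1 - e t`, written as `(1 + i cot πt) / 2`. -/
noncomputable def kc (t : ℝ) : ℂ :=
  1 / 2 + Complex.I / 2 * ((Real.cos (Real.pi * t) / Real.sin (Real.pi * t) : ℝ) : ℂ)

lemma kc_mul (t : ℝ) (h : Real.sin (Real.pi * t) ≠ 0) : kc t * (1 - e t) = 1 := by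
  have he : e t = ((1 - 2 * Real.sin (Real.pi * t) ^ 2 : ℝ) : ℂ)
      + ((2 * Real.sin (Real.pi * t) * Real.cos (Real.pi * t) : ℝ) : ℂ) * Complex.I := by
    rw [e_eq, Complex.exp_mul_I, ← Complex.ofReal_cos, ← Complex.ofReal_sin]
    have h1 : 2 * Real.pi * t = 2 * (Real.pi * t) := by ring
    rw [h1, Real.sin_two_mul, Real.cos_two_mul]
    have := Real.sin_sq_add_cos_sq (Real.pi * t)
    congr 2
    linarith
  rw [he, kc]
  have hs := Real.sin_sq_add_cos_sq (Real.pi * t)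
  set s := Real.sin (Real.pi * t)
  set co := Real.cos (Real.pi * t)
  have hs' : (s : ℂ) ^ 2 + (co : ℂ) ^ 2 = 1 := by exact_mod_cast hs
  have hsc : (s : ℂ) ≠ 0 := by exact_mod_cast h
  push_cast
  field_simp
  linear_combination (2 * (s : ℂ)) * hs' +
    (-2 * (co : ℂ) ^ 2 * s) * Complex.I_sq

lemma sin_ge {δ t : ℝ} (hδ : 0 < δ) (h1 : δ ≤ t) (h2 : t ≤ 1 - δ) :
    2 * δ ≤ Real.sin (Real.pi * t) := by
  have hpi := Real.pi_pos
  rcases le_total t (1 / 2) with h | h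
  · have := Real.mul_le_sin (x := Real.pi * t) (by nlinarith) (by nlinarith)
    have h3 : 2 / Real.pi * (Real.pi * t) = 2 * t := by field_simp
    linarith
  · have := Real.mul_le_sin (x := Real.pi - Real.pi * t) (by nlinarith) (by nlinarith)
    have h3 : 2 / Real.pi * (Real.pi - Real.pi * t) = 2 * (1 - t) := by field_simp
    rw [Real.sin_pi_sub] at this
    linarith

lemma abs_cot_le {δ t : ℝ} (hδ : 0 < δ) (h1 : δ ≤ t) (h2 : t ≤ 1 - δ) :
    |Real.cos (Real.pi * t) / Real.sin (Real.pi * t)| ≤ 1 / (2 * δ) := by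
  have hs := sin_ge hδ h1 h2
  rw [abs_div, abs_of_pos (by linarith : 0 < Real.sin (Real.pi * t))]
  exact div_le_div₀ zero_le_one (Real.abs_cos_le_one _) (by linarith) hs

lemma cot_anti {δ s t : ℝ} (hδ : 0 < δ) (h1 : δ ≤ s) (hst : s ≤ t) (h2 : t ≤ 1 - δ) :
    Real.cos (Real.pi * t) / Real.sin (Real.pi * t) ≤
      Real.cos (Real.pi * s) / Real.sin (Real.pi * s) := by
  have hpi := Real.pi_pos
  have hs := sin_ge hδ h1 (hst.trans h2)
  have ht := sin_ge hδ (h1.trans hst) h2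
  rw [div_le_div_iff₀ (by linarith) (by linarith)]
  have := Real.sin_nonneg_of_nonneg_of_le_pi (x := Real.pi * t - Real.pi * s)
    (by nlinarith) (by nlinarith)
  rw [Real.sin_sub] at this
  linarith

/-- **Kusmin–Landau**: if the increments of `f` are increasing and all lie in `[j + δ, j + 1 - δ]`
for a single integer `j`, the exponential sum is `O(1/δ)`. -/
lemma kusmin_landau (f : ℕ → ℝ) (j : ℤ) (δ : ℝ) (hδ : 0 < δ) (n : ℕ)
    (h1 : ∀ k < n, δ ≤ f (k + 1) - f k - j ∧ f (k + 1) - f k - j ≤ 1 - δ)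
    (mono : ∀ k, k + 1 < n → f (k + 1) - f k ≤ f (k + 2) - f (k + 1)) :
    ‖∑ k ∈ Finset.range n, e (f k)‖ ≤ 2 / δ := by
  rcases Nat.eq_zero_or_pos n with rfl | hn
  · simp; positivity
  set θ : ℕ → ℝ := fun k => f (k + 1) - f k - j with hθ
  set ct : ℕ → ℝ := fun k => Real.cos (Real.pi * θ k) / Real.sin (Real.pi * θ k) with hct
  have hstep : ∀ k < n, e (f k) + kc (θ k) * e (f (k + 1)) = kc (θ k) * e (f k) := by
    intro k hk
    have h2 : e (f (k + 1)) = e (f k) * e (θ k) := by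
      rw [hθ]; simp only []; rw [e_sub_int, ← e_add]; congr 1; ring
    have h3 := kc_mul (θ k) (by
      have := sin_ge hδ (h1 k hk).1 (h1 k hk).2
      intro h0; simp only [hθ] at h0; linarith)
    rw [h2]
    linear_combination (-e (f k)) * h3
  have key : ∀ m, m < n → ‖∑ k ∈ Finset.range (m + 1), e (f k) + kc (θ m) * e (f (m + 1))‖
      ≤ ‖kc (θ 0)‖ + (ct 0 - ct m) / 2 := by
    intro m
    induction m with
    | zero =>
      intro h0
      simp only [zero_add, Finset.sum_range_one, sub_self, zero_div, add_zero]
      have := hstep 0 h0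
      simp only [zero_add] at this
      rw [this, norm_mul, norm_e, mul_one]
    | succ m ih =>
      intro hm
      rw [Finset.sum_range_succ, add_assoc, hstep (m + 1) hm]
      have e1 : ∑ k ∈ Finset.range (m + 1), e (f k) + kc (θ (m + 1)) * e (f (m + 1)) =
        (∑ k ∈ Finset.range (m + 1), e (f k) + kc (θ m) * e (f (m + 1))) +
          (kc (θ (m + 1)) - kc (θ m)) * e (f (m + 1)) := by ring
      rw [e1]
      refine (norm_add_le _ _).trans ?_
      have hd : ‖(kc (θ (m + 1)) - kc (θ m)) * e (f (m + 1))‖ = (ct m - ct (m + 1)) / 2 := by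
        rw [norm_mul, norm_e, mul_one]
        have : kc (θ (m + 1)) - kc (θ m) =
            Complex.I / 2 * ((ct (m + 1) - ct m : ℝ) : ℂ) := by
          simp only [kc, hct]; push_cast; ring
        rw [this, norm_mul, Complex.norm_real, Real.norm_eq_abs, norm_div, Complex.norm_I]
        have hle : ct (m + 1) ≤ ct m := by
          apply cot_anti hδ (h1 m (by omega)).1 _ (h1 (m + 1) hm).2
          have := mono m hm
          linarith
        rw [abs_of_nonpos (by linarith)]
        simp; ring
      rw [hd]
      have := ih (by omega)
      linarith
  obtain ⟨m, rfl⟩ : ∃ m, n = m + 1 := ⟨n - 1, by omega⟩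
  have hk := key m (by omega)
  have hδ2 : δ ≤ 1 / 2 := by have := h1 0 hn; linarith
  have hkc : ∀ k < m + 1, ‖kc (θ k)‖ ≤ 1 / (2 * δ) := by
    intro k hk
    refine (norm_add_le _ _).trans ?_
    rw [norm_mul, Complex.norm_real, Real.norm_eq_abs]
    have := abs_cot_le hδ (h1 k hk).1 (h1 k hk).2
    rw [norm_div, norm_div, Complex.norm_I]
    have h4 : (1 : ℝ) ≤ 1 / (2 * δ) := by rw [le_div_iff₀ (by positivity)]; linarith
    simp only [norm_one, Complex.norm_ofNat]
    change |Real.cos (Real.pi * θ k) / Real.sin (Real.pi * θ k)| ≤ _ at this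
    linarith
  have ha := abs_le.mp (abs_cot_le hδ (h1 0 hn).1 (h1 0 hn).2)
  have hb := abs_le.mp (abs_cot_le hδ (h1 m (by omega)).1 (h1 m (by omega)).2)
  have e2 : ∑ k ∈ Finset.range (m + 1), e (f k) =
    (∑ k ∈ Finset.range (m + 1), e (f k) + kc (θ m) * e (f (m + 1)))
      - kc (θ m) * e (f (m + 1)) := by ring
  rw [e2]
  refine (norm_sub_le _ _).trans ?_
  rw [norm_mul, norm_e, mul_one]
  have h5 := hkc 0 hn
  have h6 := hkc m (by omega)
  have h7 : 2 / δ = 4 * (1 / (2 * δ)) := by field_simp; norm_num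
  have h8 : 0 < 1 / (2 * δ) := by positivity
  change -(1 / (2 * δ)) ≤ ct 0 ∧ ct 0 ≤ _ at ha
  change -(1 / (2 * δ)) ≤ ct m ∧ ct m ≤ _ at hb
  linarith [ha.1, ha.2, hb.1, hb.2]

/-- An order-convex finite set of naturals is an interval. -/
lemma ordconn_eq_Ico (S : Finset ℕ) (hS : ∀ x ∈ S, ∀ z ∈ S, ∀ y, x ≤ y → y ≤ z → y ∈ S) :
    ∃ a n, S = Finset.Ico a (a + n) := by
  rcases S.eq_empty_or_nonempty with rfl | hne
  · exact ⟨0, 0, by simp⟩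
  · refine ⟨S.min' hne, S.max' hne + 1 - S.min' hne, ?_⟩
    have hle : S.min' hne ≤ S.max' hne := S.min'_le _ (S.max'_mem hne)
    ext y
    rw [Finset.mem_Ico]
    constructor
    · intro hy
      have := S.min'_le _ hy
      have := S.le_max' _ hy
      omega
    · rintro ⟨h1, h2⟩
      exact hS _ (S.min'_mem hne) _ (S.max'_mem hne) y h1 (by omega)

/-- **Second derivative test**, stated for a sequence whose second differences lie in
`[lam, h * lam]`. The indices are grouped by the integer part of the increment; in each group
the indices with increment within `√lam` of an integer are counted, and Kusmin–Landau handles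
the others. -/
lemma second_diff_test (f : ℕ → ℝ) (N : ℕ) (lam h : ℝ) (hlam : 0 < lam) (hh : 1 ≤ h)
    (h2 : ∀ k < N, lam ≤ f (k + 2) - 2 * f (k + 1) + f k ∧
      f (k + 2) - 2 * f (k + 1) + f k ≤ h * lam) :
    ‖∑ k ∈ Finset.range N, e (f k)‖ ≤ 10 * h * (N * √lam + 1 / √lam) := by
  have hsq : 0 < √lam := Real.sqrt_pos.mpr hlam
  rcases le_or_gt (1 / 4) lam with hbig | hsmall
  · have h3 : (1 : ℝ) / 2 ≤ √lam := by
      apply Real.le_sqrt_of_sq_le; norm_num; linarith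
    calc ‖∑ k ∈ Finset.range N, e (f k)‖ ≤ ∑ k ∈ Finset.range N, ‖e (f k)‖ := norm_sum_le _ _
      _ = N := by simp [norm_e]
      _ ≤ 10 * (N * √lam) := by nlinarith [(Nat.cast_nonneg N : (0 : ℝ) ≤ N)]
      _ ≤ 10 * (N * √lam + 1 / √lam) := by
        have : 0 < 1 / √lam := by positivity
        linarith
      _ ≤ 10 * h * (N * √lam + 1 / √lam) := by
        have : 0 ≤ N * √lam + 1 / √lam := by positivity
        nlinarith
  rcases Nat.eq_zero_or_pos N with rfl | hN
  · simp; positivity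
  set θ : ℕ → ℝ := fun k => f (k + 1) - f k with hθ
  have hinc : ∀ b a, a ≤ b → b < N → lam * (b - a : ℝ) ≤ θ b - θ a ∧
      θ b - θ a ≤ h * lam * (b - a : ℝ) := by
    intro b
    induction b with
    | zero => intro a ha _; obtain rfl : a = 0 := by omega
              simp
    | succ b ih =>
      intro a ha hb
      rcases Nat.lt_or_ge b a with h3 | h3
      · obtain rfl : a = b + 1 := by omega
        simp
      · have h4 := ih a h3 (by omega)
        have h5 := h2 b (by omega)
        have h6 : θ (b + 1) - θ b = f (b + 2) - 2 * f (b + 1) + f b := by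
          simp only [hθ]; ring
        push_cast
        constructor <;> nlinarith [h4.1, h4.2, h5.1, h5.2]
  have hmono : ∀ a b, a ≤ b → b < N → θ a ≤ θ b := by
    intro a b hab hb
    have h3 := (hinc b a hab hb).1
    have : (a : ℝ) ≤ b := by exact_mod_cast hab
    nlinarith
  set δ := √lam with hδ
  have hδh : δ < 1 / 2 := by
    rw [hδ, Real.sqrt_lt' (by norm_num)]; norm_num; linarith
  have hδδ : δ * δ = lam := Real.mul_self_sqrt hlam.le
  -- indices whose increment lies in a window of length `δ`
  have hbad : ∀ (S : Finset ℕ) (u : ℝ), (∀ k ∈ S, k < N ∧ u ≤ θ k ∧ θ k ≤ u + δ) →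
      (S.card : ℝ) ≤ 1 / δ + 1 := by
    intro S u hS
    rcases S.eq_empty_or_nonempty with rfl | hne
    · simp; positivity
    have hsub : S ⊆ Finset.Icc (S.min' hne) (S.max' hne) := by
      intro k hk
      rw [Finset.mem_Icc]; exact ⟨S.min'_le _ hk, S.le_max' _ hk⟩
    have hcard := Finset.card_le_card hsub
    rw [Nat.card_Icc] at hcard
    have hle : S.min' hne ≤ S.max' hne := S.min'_le _ (S.max'_mem hne)
    have ha := hS _ (S.min'_mem hne)
    have hb := hS _ (S.max'_mem hne)
    have h3 := (hinc _ _ hle hb.1).1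
    have h4 : ((S.max' hne : ℝ) - S.min' hne) ≤ 1 / δ := by
      rw [le_div_iff₀ hsq]
      have : δ * (((S.max' hne : ℝ) - S.min' hne) * δ) ≤ δ * 1 := by
        nlinarith [ha.2.1, hb.2.2]
      exact le_of_mul_le_mul_left this hsq
    have h5 : (S.card : ℝ) ≤ (S.max' hne : ℝ) + 1 - S.min' hne := by
      have : (S.card : ℝ) ≤ ((S.max' hne + 1 - S.min' hne : ℕ) : ℝ) := by exact_mod_cast hcard
      rw [Nat.cast_sub (by omega)] at this
      push_cast at this
      exact this
    linarith
  have htriv : ∀ S : Finset ℕ, ‖∑ k ∈ S, e (f k)‖ ≤ S.card := by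
    intro S
    refine (norm_sum_le _ _).trans ?_
    simp [norm_e]
  have h1δ : 2 ≤ 1 / δ := by rw [le_div_iff₀ hsq]; linarith
  have hfib : ∀ j : ℤ, ‖∑ k ∈ (Finset.range N).filter (fun k => ⌊θ k⌋ = j), e (f k)‖ ≤ 5 / δ := by
    intro j
    set F := (Finset.range N).filter (fun k => ⌊θ k⌋ = j) with hF
    have hFm : ∀ k ∈ F, k < N ∧ (j : ℝ) ≤ θ k ∧ θ k < j + 1 := by
      intro k hk
      rw [hF, Finset.mem_filter, Finset.mem_range, Int.floor_eq_iff] at hk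
      exact hk
    have hFm' : ∀ k, k < N → (j : ℝ) ≤ θ k → θ k < j + 1 → k ∈ F := by
      intro k h1 h2 h3
      rw [hF, Finset.mem_filter, Finset.mem_range, Int.floor_eq_iff]
      exact ⟨h1, h2, h3⟩
    rw [← Finset.sum_filter_add_sum_filter_not F (fun k => θ k ≤ j + δ),
      ← Finset.sum_filter_add_sum_filter_not (F.filter (fun k => ¬ θ k ≤ j + δ))
        (fun k => j + 1 - δ ≤ θ k)]
    refine (norm_add_le _ _).trans ?_
    have hA := (htriv (F.filter (fun k => θ k ≤ j + δ))).trans (hbad _ j (by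
      intro k hk
      rw [Finset.mem_filter] at hk
      exact ⟨(hFm k hk.1).1, (hFm k hk.1).2.1, hk.2⟩))
    have hB := (htriv ((F.filter (fun k => ¬ θ k ≤ j + δ)).filter
        (fun k => j + 1 - δ ≤ θ k))).trans (hbad _ (j + 1 - δ) (by
      intro k hk
      rw [Finset.mem_filter, Finset.mem_filter] at hk
      exact ⟨(hFm k hk.1.1).1, hk.2, by linarith [(hFm k hk.1.1).2.2]⟩))
    have hG : ‖∑ k ∈ (F.filter (fun k => ¬ θ k ≤ j + δ)).filter
        (fun k => ¬ (j + 1 - δ ≤ θ k)), e (f k)‖ ≤ 2 / δ := by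
      set G := (F.filter (fun k => ¬ θ k ≤ j + δ)).filter (fun k => ¬ (j + 1 - δ ≤ θ k)) with hGd
      have hGm : ∀ k, k ∈ G ↔ k < N ∧ (j + δ < θ k ∧ θ k < j + 1 - δ) := by
        intro k
        rw [hGd, Finset.mem_filter, Finset.mem_filter, not_le, not_le]
        constructor
        · rintro ⟨⟨h1, h2⟩, h3⟩
          exact ⟨(hFm k h1).1, h2, h3⟩
        · rintro ⟨h1, h2, h3⟩
          exact ⟨⟨hFm' k h1 (by linarith) (by linarith), h2⟩, h3⟩
      obtain ⟨a, n, hI⟩ := ordconn_eq_Ico G (by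
        intro x hx z hz y hxy hyz
        rw [hGm] at hx hz ⊢
        refine ⟨by omega, ?_, ?_⟩
        · linarith [hmono x y hxy (by omega)]
        · linarith [hmono y z hyz (by omega)])
      have hm : ∀ k < n, a + k ∈ G := by
        intro k hk; rw [hI, Finset.mem_Ico]; omega
      rw [hI, Finset.sum_Ico_eq_sum_range, Nat.add_sub_cancel_left]
      refine kusmin_landau (fun k => f (a + k)) j δ hsq n ?_ ?_
      · intro k hk
        have := (hGm _).mp (hm k hk)
        simp only [hθ] at this
        rw [← add_assoc]
        constructor <;> linarith [this.2.1, this.2.2]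
      · intro k hk
        have := hmono (a + k) (a + k + 1) (by omega) ((hGm _).mp (hm (k + 1) hk)).1
        simp only [hθ] at this
        exact this
    have := (norm_add_le (∑ k ∈ (F.filter (fun k => ¬ θ k ≤ j + δ)).filter
        (fun k => j + 1 - δ ≤ θ k), e (f k)) (∑ k ∈ (F.filter (fun k => ¬ θ k ≤ j + δ)).filter
        (fun k => ¬ (j + 1 - δ ≤ θ k)), e (f k)))
    have h7 : 5 / δ = 5 * (1 / δ) := by ring
    have h8 : 2 / δ = 2 * (1 / δ) := by ring
    linarith
  have hmaps : ∀ k ∈ Finset.range N, ⌊θ k⌋ ∈ Finset.Icc ⌊θ 0⌋ ⌊θ (N - 1)⌋ := by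
    intro k hk
    rw [Finset.mem_range] at hk
    rw [Finset.mem_Icc]
    exact ⟨Int.floor_le_floor (hmono 0 k (by omega) hk),
      Int.floor_le_floor (hmono k (N - 1) (by omega) (by omega))⟩
  rw [← Finset.sum_fiberwise_of_maps_to hmaps]
  refine (norm_sum_le _ _).trans ((Finset.sum_le_sum fun j _ => hfib j).trans ?_)
  rw [Finset.sum_const, Int.card_Icc, nsmul_eq_mul]
  have hfl : ⌊θ 0⌋ ≤ ⌊θ (N - 1)⌋ := Int.floor_le_floor (hmono 0 (N - 1) (by omega) (by omega))
  have hcast : (((⌊θ (N - 1)⌋ + 1 - ⌊θ 0⌋).toNat : ℕ) : ℝ) = ⌊θ (N - 1)⌋ + 1 - ⌊θ 0⌋ := by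
    have : (((⌊θ (N - 1)⌋ + 1 - ⌊θ 0⌋).toNat : ℕ) : ℤ) = ⌊θ (N - 1)⌋ + 1 - ⌊θ 0⌋ :=
      Int.toNat_of_nonneg (by omega)
    exact_mod_cast congrArg (Int.cast : ℤ → ℝ) this
  rw [hcast]
  have hup := (hinc (N - 1) 0 (by omega) (by omega)).2
  have hf1 := Int.floor_le (θ (N - 1))
  have hf2 := Int.lt_floor_add_one (θ 0)
  have hN1 : ((N - 1 : ℕ) : ℝ) ≤ N := by exact_mod_cast Nat.sub_le N 1
  have hcnt : (⌊θ (N - 1)⌋ : ℝ) + 1 - ⌊θ 0⌋ ≤ h * lam * N + 2 := by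
    have : h * lam * (((N - 1 : ℕ) : ℝ) - ((0 : ℕ) : ℝ)) ≤ h * lam * N := by
      apply mul_le_mul_of_nonneg_left _ (by positivity); simp
    linarith
  calc ((⌊θ (N - 1)⌋ : ℝ) + 1 - ⌊θ 0⌋) * (5 / δ) ≤ (h * lam * N + 2) * (5 / δ) := by
        apply mul_le_mul_of_nonneg_right hcnt (by positivity)
    _ = 5 * h * (N * δ) + 10 * (1 / δ) := by
        rw [← hδδ]; field_simp; ring
    _ ≤ 10 * h * (N * δ + 1 / δ) := by
        have h3 : 0 ≤ N * δ := by positivity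
        have h4 : 0 ≤ 1 / δ := by positivity
        nlinarith

/-! ### Exponential sums of `β m ^ c` along arithmetic progressions -/

lemma rpow_mvt (p x y : ℝ) (hx : 0 < x) (hxy : x < y) :
    ∃ u, x < u ∧ u < y ∧ y ^ p - x ^ p = p * u ^ (p - 1) * (y - x) := by
  obtain ⟨u, hu, h⟩ := exists_hasDerivAt_eq_slope (fun t : ℝ => t ^ p)
    (fun t => p * t ^ (p - 1)) hxy
    (fun t ht => (Real.continuousAt_rpow_const t p
      (Or.inl (by have := ht.1; linarith))).continuousWithinAt)
    (fun t ht => Real.hasDerivAt_rpow_const (Or.inl (by have := ht.1; linarith)))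
  refine ⟨u, hu.1, hu.2, ?_⟩
  rw [eq_div_iff (by linarith)] at h
  exact h.symm

lemma second_diff_rpow (c x s : ℝ) (hx : 0 < x) (hs : 0 < s) :
    ∃ u, x < u ∧ u < x + 2 * s ∧
      (x + 2 * s) ^ c - 2 * (x + s) ^ c + x ^ c = c * (c - 1) * s ^ 2 * u ^ (c - 2) := by
  obtain ⟨t, ht, h⟩ := exists_hasDerivAt_eq_slope (fun t : ℝ => (t + s) ^ c - t ^ c)
    (fun t => 1 * c * (t + s) ^ (c - 1) - c * t ^ (c - 1)) (show x < x + s by linarith)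
    (fun t ht => by
      have h0 := ht.1
      apply ContinuousAt.continuousWithinAt
      apply ContinuousAt.sub
      · exact ContinuousAt.rpow_const (by fun_prop) (Or.inl (by linarith))
      · exact Real.continuousAt_rpow_const t c (Or.inl (by linarith)))
    (fun t ht => by
      have h0 := ht.1
      apply HasDerivAt.sub
      · exact ((hasDerivAt_id t).add_const s).rpow_const (Or.inl (by simp; linarith))
      · exact Real.hasDerivAt_rpow_const (Or.inl (by linarith)))
  obtain ⟨u, hu1, hu2, hu⟩ := rpow_mvt (c - 1) t (t + s) (by linarith [ht.1]) (by linarith)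
  refine ⟨u, by linarith [ht.1], by linarith [ht.2], ?_⟩
  rw [eq_div_iff (by linarith)] at h
  have e1 : x + s + s = x + 2 * s := by ring
  have e2 : c - 1 - 1 = c - 2 := by ring
  rw [e1] at h
  rw [e2] at hu
  linear_combination (-1 : ℝ) * h + c * s * hu

/-- A finite set of naturals that consists of consecutive terms of an arithmetic progression of
difference `q`, phrased so that neither the residue class nor the end points are named. -/
def APset (q : ℕ) (S : Finset ℕ) : Prop :=
  (∀ x ∈ S, ∀ y ∈ S, x ≡ y [MOD q]) ∧
    ∀ x ∈ S, ∀ z ∈ S, ∀ y, x ≤ y → y ≤ z → y ≡ x [MOD q] → y ∈ S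

lemma APset.exists_eq {q : ℕ} {S : Finset ℕ} (h : APset q S) (hq : 0 < q) (hne : S.Nonempty) :
    ∃ s K, s ∈ S ∧ s + q * K ∈ S ∧ S = (Finset.range (K + 1)).image (fun k => s + q * k) := by
  have hle : S.min' hne ≤ S.max' hne := S.min'_le _ (S.max'_mem hne)
  have hd : ∀ x ∈ S, ∃ k, x = S.min' hne + q * k := by
    intro x hx
    obtain ⟨k, hk⟩ := (Nat.modEq_iff_dvd' (S.min'_le _ hx)).mp (h.1 _ (S.min'_mem hne) _ hx)
    have := S.min'_le _ hx
    exact ⟨k, by omega⟩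
  obtain ⟨K, hK⟩ := hd _ (S.max'_mem hne)
  refine ⟨S.min' hne, K, S.min'_mem hne, hK ▸ S.max'_mem hne, ?_⟩
  ext y
  rw [Finset.mem_image]
  constructor
  · intro hy
    obtain ⟨k, hk⟩ := hd y hy
    refine ⟨k, ?_, hk.symm⟩
    rw [Finset.mem_range]
    have h1 := S.le_max' _ hy
    have : q * k ≤ q * K := by omega
    have := Nat.le_of_mul_le_mul_left this hq
    omega
  · rintro ⟨k, hk, rfl⟩
    rw [Finset.mem_range] at hk
    have : q * k ≤ q * K := Nat.mul_le_mul_left _ (by omega)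
    refine h.2 _ (S.min'_mem hne) _ (S.max'_mem hne) _ (by omega) (by omega) ?_
    simp [Nat.ModEq]

lemma APset.filter_ge {q : ℕ} {S : Finset ℕ} (h : APset q S) (j : ℕ) :
    APset q (S.filter (fun l => j ≤ l)) := by
  constructor
  · intro x hx y hy
    exact h.1 x (Finset.mem_filter.mp hx).1 y (Finset.mem_filter.mp hy).1
  · intro x hx z hz y hxy hyz hm
    rw [Finset.mem_filter] at *
    exact ⟨h.2 x hx.1 z hz.1 y hxy hyz hm, by omega⟩

lemma APset.card_le {q : ℕ} {S : Finset ℕ} (h : APset q S) (hq : 0 < q) {Y : ℝ} (hY : 0 ≤ Y)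
    (hS : ∀ x ∈ S, (x : ℝ) ≤ Y) : (S.card : ℝ) ≤ Y / q + 1 := by
  rcases S.eq_empty_or_nonempty with rfl | hne
  · simp; positivity
  obtain ⟨s, K, _, hK, hS'⟩ := h.exists_eq hq hne
  have h1 : S.card ≤ K + 1 := by
    rw [hS']; exact Finset.card_image_le.trans (by simp)
  have h2 := hS _ hK
  have hq' : (0 : ℝ) < q := by exact_mod_cast hq
  have h3 : (K : ℝ) ≤ Y / q := by
    rw [le_div_iff₀ hq']
    push_cast at h2
    have : (0 : ℝ) ≤ s := Nat.cast_nonneg s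
    nlinarith
  have : (S.card : ℝ) ≤ K + 1 := by exact_mod_cast h1
  linarith

lemma ap_vdc_pos (c κ : ℝ) (hc1 : 1 < c) (hc2 : c < 2) (hκ : 0 < κ) (hκ1 : κ < 1) :
    ∃ C : ℝ, 0 < C ∧ ∀ (β : ℝ) (q : ℕ) (Y : ℝ) (S : Finset ℕ), 0 < β → 0 < q → (q : ℝ) ≤ Y →
      APset q S → (∀ m ∈ S, κ * Y < (m : ℝ) ∧ (m : ℝ) ≤ Y) →
      ‖∑ m ∈ S, e (β * (m : ℝ) ^ c)‖ ≤
        C * (√β * Y ^ (c / 2) + Y ^ (1 - c / 2) / (q * √β)) := by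
  set A : ℝ := c * (c - 1) * 3 ^ (c - 2) with hA
  have hA0 : 0 < A := by
    have : 0 < c - 1 := by linarith
    positivity
  set h : ℝ := (κ / 3) ^ (c - 2) with hh
  have hh1 : 1 ≤ h := by
    apply Real.one_le_rpow_of_pos_of_le_one_of_nonpos (by positivity) (by linarith) (by linarith)
  have hsA : 0 < √A := Real.sqrt_pos.mpr hA0
  refine ⟨10 * h * (2 * √A + 1 / √A), by positivity, ?_⟩
  intro β q Y S hβ hq hqY hAP hS
  have hq' : (0 : ℝ) < q := by exact_mod_cast hq
  have hY : 0 < Y := by linarith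
  have hsβ : 0 < √β := Real.sqrt_pos.mpr hβ
  rcases S.eq_empty_or_nonempty with rfl | hne
  · simp; positivity
  obtain ⟨s, K, hs, hK, hS'⟩ := hAP.exists_eq hq hne
  have hinj : Set.InjOn (fun k => s + q * k) (Finset.range (K + 1) : Set ℕ) := by
    intro a _ b _ hab
    simp only at hab
    exact Nat.eq_of_mul_eq_mul_left hq (by omega)
  rw [hS', Finset.sum_image hinj]
  set lam : ℝ := A * β * q ^ 2 * Y ^ (c - 2) with hlam
  have hYp : 0 < Y ^ (c - 2) := by positivity
  have hlam0 : 0 < lam := by positivity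
  have hs1 := (hS s hs).1
  have hK1 := (hS _ hK).2
  push_cast at hK1
  have hs0 : 0 < κ * Y := by positivity
  have main := second_diff_test (fun k => β * ((s + q * k : ℕ) : ℝ) ^ c) (K + 1) lam h hlam0 hh1 (by
    intro k hk
    have hkK : (k : ℝ) ≤ K := by exact_mod_cast (by omega : k ≤ K)
    have hk0 : (0 : ℝ) ≤ k := Nat.cast_nonneg k
    obtain ⟨u, hu1, hu2, hu⟩ := second_diff_rpow c (s + q * k) q (by nlinarith) hq'
    have heq : β * ((s + q * (k + 2) : ℕ) : ℝ) ^ c - 2 * (β * ((s + q * (k + 1) : ℕ) : ℝ) ^ c)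
        + β * ((s + q * k : ℕ) : ℝ) ^ c = β * (c * (c - 1) * q ^ 2 * u ^ (c - 2)) := by
      rw [← hu]; push_cast
      have e1 : (s : ℝ) + q * (k + 2) = s + q * k + 2 * q := by ring
      have e2 : (s : ℝ) + q * (k + 1) = s + q * k + q := by ring
      rw [e1, e2]; ring
    simp only [heq]
    have hul : κ * Y < u := by nlinarith
    have huu : u ≤ 3 * Y := by nlinarith
    have hu0 : 0 < u := by linarith
    have b1 : (3 * Y) ^ (c - 2) ≤ u ^ (c - 2) :=
      Real.rpow_le_rpow_of_nonpos hu0 huu (by linarith)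
    have b2 : u ^ (c - 2) ≤ (κ * Y) ^ (c - 2) :=
      Real.rpow_le_rpow_of_nonpos hs0 hul.le (by linarith)
    have hcc : 0 < c * (c - 1) := mul_pos (by linarith) (by linarith)
    have hB : 0 < β * (c * (c - 1) * q ^ 2) := by positivity
    constructor
    · calc lam = β * (c * (c - 1) * q ^ 2) * (3 * Y) ^ (c - 2) := by
            rw [Real.mul_rpow (by norm_num) hY.le]; simp only [hlam, hA]; ring
        _ ≤ β * (c * (c - 1) * q ^ 2) * u ^ (c - 2) := by gcongr
        _ = _ := by ring
    · calc β * (c * (c - 1) * q ^ 2 * u ^ (c - 2)) = β * (c * (c - 1) * q ^ 2) * u ^ (c - 2) := by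
            ring
        _ ≤ β * (c * (c - 1) * q ^ 2) * (κ * Y) ^ (c - 2) := by gcongr
        _ = h * lam := by
            have e3 : κ * Y = (κ / 3) * 3 * Y := by ring
            rw [e3, Real.mul_rpow (by positivity) hY.le,
              Real.mul_rpow (by positivity) (by norm_num)]
            simp only [hlam, hA, hh]; ring)
  refine main.trans ?_
  have hsl : √lam = √A * √β * q * Y ^ (c / 2 - 1) := by
    have e4 : lam = (√A * √β * q * Y ^ (c / 2 - 1)) ^ 2 := by
      rw [mul_pow, mul_pow, mul_pow, Real.sq_sqrt hA0.le, Real.sq_sqrt hβ.le,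
        ← Real.rpow_natCast (Y ^ (c / 2 - 1)), ← Real.rpow_mul hY.le, hlam]
      congr 2; push_cast; ring
    rw [e4, Real.sqrt_sq (by positivity)]
  have hN : ((K + 1 : ℕ) : ℝ) * q ≤ 2 * Y := by
    push_cast
    have : (0 : ℝ) ≤ s := Nat.cast_nonneg s
    nlinarith
  have t1 : ((K + 1 : ℕ) : ℝ) * √lam ≤ 2 * √A * (√β * Y ^ (c / 2)) := by
    have e5 : Y ^ (c / 2) = Y * Y ^ (c / 2 - 1) := by
      rw [Real.rpow_sub_one hY.ne']; field_simp
    calc ((K + 1 : ℕ) : ℝ) * √lam = (((K + 1 : ℕ) : ℝ) * q) * (√A * √β * Y ^ (c / 2 - 1)) := by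
          rw [hsl]; ring
      _ ≤ (2 * Y) * (√A * √β * Y ^ (c / 2 - 1)) := by gcongr
      _ = _ := by rw [e5]; ring
  have t2 : 1 / √lam = 1 / √A * (Y ^ (1 - c / 2) / (q * √β)) := by
    rw [hsl]
    have e6 : Y ^ (1 - c / 2) = (Y ^ (c / 2 - 1))⁻¹ := by
      rw [← Real.rpow_neg hY.le]; congr 1; ring
    rw [e6]; field_simp
  rw [t2]
  have p1 : 0 ≤ √β * Y ^ (c / 2) := by positivity
  have p2 : 0 ≤ Y ^ (1 - c / 2) / (q * √β) := by positivity
  have p3 : 0 < 1 / √A := by positivity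
  have : ((K + 1 : ℕ) : ℝ) * √lam + 1 / √A * (Y ^ (1 - c / 2) / (q * √β)) ≤
      (2 * √A + 1 / √A) * (√β * Y ^ (c / 2) + Y ^ (1 - c / 2) / (q * √β)) := by
    nlinarith [mul_nonneg hsA.le p2, mul_nonneg p3.le p1]
  calc _ ≤ 10 * h * ((2 * √A + 1 / √A) * (√β * Y ^ (c / 2) + Y ^ (1 - c / 2) / (q * √β))) := by
        gcongr
    _ = _ := by ring

/-- The second derivative test for `β m ^ c` along consecutive terms of a progression of
difference `q` in `(κ Y, Y]`. -/
lemma ap_vdc (c κ : ℝ) (hc1 : 1 < c) (hc2 : c < 2) (hκ : 0 < κ) (hκ1 : κ < 1) :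
    ∃ C : ℝ, 0 < C ∧ ∀ (β : ℝ) (q : ℕ) (Y : ℝ) (S : Finset ℕ), β ≠ 0 → 0 < q → (q : ℝ) ≤ Y →
      APset q S → (∀ m ∈ S, κ * Y < (m : ℝ) ∧ (m : ℝ) ≤ Y) →
      ‖∑ m ∈ S, e (β * (m : ℝ) ^ c)‖ ≤
        C * (√|β| * Y ^ (c / 2) + Y ^ (1 - c / 2) / (q * √|β|)) := by
  obtain ⟨C, hC, h⟩ := ap_vdc_pos c κ hc1 hc2 hκ hκ1
  refine ⟨C, hC, ?_⟩
  intro β q Y S hβ hq hqY hAP hS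
  rcases lt_or_gt_of_ne hβ with hn | hp
  · have := h (-β) q Y S (by linarith) hq hqY hAP hS
    rw [abs_of_neg hn]
    refine le_trans (le_of_eq ?_) this
    rw [← RCLike.norm_conj, map_sum]
    congr 1
    apply Finset.sum_congr rfl
    intro m _
    rw [neg_mul, e_neg]
  · rw [abs_of_pos hp]
    exact h β q Y S hp hq hqY hAP hS

/-! ### Congruence conditions and bilinear sums -/

lemma sum_inv_le {X : ℝ} (hX : 1 ≤ X) (s : Finset ℕ) (hs : ∀ n ∈ s, 0 < n ∧ (n : ℝ) ≤ X) :
    ∑ n ∈ s, (1 : ℝ) / n ≤ 1 + Real.log X := by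
  have h := harmonic_floor_le_one_add_log X hX
  rw [harmonic_eq_sum_Icc] at h
  push_cast at h
  refine le_trans ?_ h
  simp only [one_div]
  apply Finset.sum_le_sum_of_subset_of_nonneg
  · intro n hn
    rw [Finset.mem_Icc]
    exact ⟨(hs n hn).1, Nat.le_floor (hs n hn).2⟩
  · intro i _ _; positivity

/-- The pair `(m, l)` occurs in the sum with modulus `d`: the product lies in `(mu X, X]` and is
congruent to `-2` modulo `d`. -/
def Cond (mu X : ℝ) (d m l : ℕ) : Prop :=
  mu * X < (m : ℝ) * l ∧ (m : ℝ) * l ≤ X ∧ d ∣ m * l + 2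

lemma Cond.symm {mu X : ℝ} {d m l : ℕ} (h : Cond mu X d m l) : Cond mu X d l m := by
  unfold Cond at *
  rw [mul_comm (l : ℝ), mul_comm l]; exact h

/-- For odd `d`, the condition `d ∣ m l + 2` forces `m` to be coprime to `d`, hence pins `l`
modulo `d`. -/
lemma Cond.modEq {mu X : ℝ} {d m x y : ℕ} (hd : ¬ 2 ∣ d) (hx : Cond mu X d m x)
    (hy : Cond mu X d m y) : x ≡ y [MOD d] := by
  have hcop : Nat.gcd d m = 1 := by
    have h1 : Nat.gcd d m ∣ d := Nat.gcd_dvd_left _ _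
    have h2 : Nat.gcd d m ∣ m * x := (Nat.gcd_dvd_right d m).trans (Dvd.intro _ rfl)
    have h3 : Nat.gcd d m ∣ 2 := (Nat.dvd_add_right h2).mp (h1.trans hx.2.2)
    rcases (Nat.dvd_prime Nat.prime_two).mp h3 with h | h
    · exact h
    · exact absurd (h ▸ h1) hd
  have h4 : m * x + 2 ≡ m * y + 2 [MOD d] :=
    ((Nat.modEq_zero_iff_dvd).mpr hx.2.2).trans ((Nat.modEq_zero_iff_dvd).mpr hy.2.2).symm
  exact Nat.ModEq.cancel_left_of_coprime hcop (Nat.ModEq.add_right_cancel' 2 h4)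

lemma Cond.convex {mu X : ℝ} {d m x y z : ℕ} (hx : Cond mu X d m x) (hz : Cond mu X d m z)
    (hxy : x ≤ y) (hyz : y ≤ z) (h : y ≡ x [MOD d]) : Cond mu X d m y := by
  have h1 : (x : ℝ) ≤ y := by exact_mod_cast hxy
  have h2 : (y : ℝ) ≤ z := by exact_mod_cast hyz
  have hm : (0 : ℝ) ≤ m := Nat.cast_nonneg m
  refine ⟨?_, ?_, ?_⟩
  · have := hx.1; nlinarith
  · have := hz.2.1; nlinarith
  · have h4 : m * y + 2 ≡ m * x + 2 [MOD d] := (h.mul_left m).add_right 2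
    exact (Nat.modEq_zero_iff_dvd).mp (h4.trans ((Nat.modEq_zero_iff_dvd).mpr hx.2.2))

open Classical in
/-- The `l` paired with `m` in the sum with modulus `d`. -/
noncomputable def LS (mu X : ℝ) (d m : ℕ) : Finset ℕ :=
  (Finset.Ioc 0 ⌊X⌋₊).filter (fun l => Cond mu X d m l)

lemma mem_LS {mu X : ℝ} {d m l : ℕ} :
    l ∈ LS mu X d m ↔ l ∈ Finset.Ioc 0 ⌊X⌋₊ ∧ Cond mu X d m l := by
  simp [LS]

lemma LS_AP {mu X : ℝ} {d m : ℕ} (hd : ¬ 2 ∣ d) : APset d (LS mu X d m) := by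
  constructor
  · intro x hx y hy
    exact (mem_LS.mp hx).2.modEq hd (mem_LS.mp hy).2
  · intro x hx z hz y hxy hyz h
    rw [mem_LS, Finset.mem_Ioc] at *
    exact ⟨by omega, hx.2.convex hz.2 hxy hyz h⟩

/-- The bilinear form `∑_d λ(d) ∑_{m ∈ Ms} ∑_l a(m) b(l) e(α (ml)^c)` over the pairs admitted by
`Cond`. -/
noncomputable def BL (c mu α X : ℝ) (Dn : ℕ) (lam : ℕ → ℝ) (Ms : Finset ℕ) (a b : ℕ → ℝ) : ℂ :=
  ∑ d ∈ Finset.range (Dn + 1), (lam d : ℂ) * ∑ m ∈ Ms, (a m : ℂ) *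
    ∑ l ∈ LS mu X d m, (b l : ℂ) * e (α * ((m : ℝ) * l) ^ c)

/-! ### Type I sums -/

/-- Inserting the weight `b` costs a factor `B` in any bound for the tails of a sum
over integers up to `X`. -/
def TailBdd (X : ℝ) (b : ℕ → ℝ) (B : ℝ) : Prop :=
  ∀ (z : ℕ → ℂ) (K : ℝ) (S : Finset ℕ), (∀ l ∈ S, 0 < l ∧ (l : ℝ) ≤ X) →
    (∀ j, ‖∑ l ∈ S.filter (fun l => j ≤ l), z l‖ ≤ K) → ‖∑ l ∈ S, (b l : ℂ) * z l‖ ≤ B * K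

lemma tailBdd_one (X : ℝ) : TailBdd X (fun _ => 1) 1 := by
  intro z K S _ h
  simpa using h 0

/-- Partial summation, from `log l = ∑_{j < l - 1} (log (j + 2) - log (j + 1))`. -/
lemma tailBdd_log (X : ℝ) (hX : 1 ≤ X) : TailBdd X (fun l => Real.log l) (Real.log X) := by
  intro z K S hS h
  set g : ℕ → ℝ := fun j => Real.log ((j + 1 : ℕ) + 1) - Real.log ((j : ℕ) + 1) with hg
  have htel : ∀ n : ℕ, ∑ j ∈ Finset.range n, g j = Real.log (n + 1) := by
    intro n
    rw [hg, Finset.sum_range_sub (fun j : ℕ => Real.log ((j : ℝ) + 1))]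
    simp
  have hg0 : ∀ j, 0 ≤ g j := by
    intro j
    simp only [hg]
    have : Real.log ((j : ℝ) + 1) ≤ Real.log (((j + 1 : ℕ) : ℝ) + 1) := by
      apply Real.log_le_log (by positivity); push_cast; linarith
    linarith
  set N := ⌊X⌋₊ - 1 with hN
  have hX1 : 1 ≤ ⌊X⌋₊ := Nat.le_floor (by simpa using hX)
  have hlog : ∀ l ∈ S, Real.log l = ∑ j ∈ Finset.range N, if j + 2 ≤ l then g j else 0 := by
    intro l hl
    have h1 := hS l hl
    have hlN : l ≤ ⌊X⌋₊ := Nat.le_floor h1.2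
    rw [← Finset.sum_filter]
    have : (Finset.range N).filter (fun j => j + 2 ≤ l) = Finset.range (l - 1) := by
      ext j; simp only [Finset.mem_filter, Finset.mem_range]; omega
    rw [this, htel, Nat.cast_sub h1.1]; simp
  have hsw : ∑ l ∈ S, ((Real.log l : ℝ) : ℂ) * z l =
      ∑ j ∈ Finset.range N, (g j : ℂ) * ∑ l ∈ S.filter (fun l => j + 2 ≤ l), z l := by
    calc ∑ l ∈ S, ((Real.log l : ℝ) : ℂ) * z l
        = ∑ l ∈ S, ∑ j ∈ Finset.range N, (if j + 2 ≤ l then (g j : ℂ) * z l else 0) := by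
          apply Finset.sum_congr rfl
          intro l hl
          rw [hlog l hl]; push_cast; rw [Finset.sum_mul]
          apply Finset.sum_congr rfl
          intro j _
          split_ifs <;> simp
      _ = _ := by
          rw [Finset.sum_comm]
          apply Finset.sum_congr rfl
          intro j _
          rw [Finset.mul_sum, Finset.sum_filter]
  simp only
  rw [hsw]
  refine (norm_sum_le _ _).trans ?_
  have hK : 0 ≤ K := (norm_nonneg _).trans (h 0)
  calc ∑ j ∈ Finset.range N, ‖(g j : ℂ) * ∑ l ∈ S.filter (fun l => j + 2 ≤ l), z l‖
      ≤ ∑ j ∈ Finset.range N, g j * K := by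
        apply Finset.sum_le_sum
        intro j _
        rw [norm_mul, Complex.norm_real, Real.norm_eq_abs, abs_of_nonneg (hg0 j)]
        exact mul_le_mul_of_nonneg_left (h (j + 2)) (hg0 j)
    _ = Real.log ((N : ℝ) + 1) * K := by rw [← Finset.sum_mul, htel]
    _ ≤ Real.log X * K := by
        apply mul_le_mul_of_nonneg_right _ hK
        apply Real.log_le_log (by positivity)
        rw [hN, Nat.cast_sub hX1]
        have := Nat.floor_le (by linarith : 0 ≤ X)
        push_cast; linarith

/-- Bilinear sums whose first variable is at most `X ^ (1 / 3)` and whose second weight can be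
removed by partial summation: the second derivative test applies to each inner sum. -/
lemma typeI (c mu : ℝ) (hc1 : 1 < c) (hc2 : c < 2) (hmu : 0 < mu) (hmu1 : mu < 1) :
    ∃ C : ℝ, 0 < C ∧ ∀ (X : ℝ) (Dn : ℕ) (lam : ℕ → ℝ) (α : ℝ) (Ms : Finset ℕ) (a b : ℕ → ℝ)
      (A B : ℝ), 2 ≤ X → (Dn : ℝ) ≤ X ^ ((1 : ℝ) / 3) → (∀ d, |lam d| ≤ 1) →
      (∀ d, 2 ∣ d → lam d = 0) → α ≠ 0 → (∀ m ∈ Ms, 0 < m ∧ (m : ℝ) ≤ X ^ ((1 : ℝ) / 3)) →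
      0 ≤ A → (∀ m ∈ Ms, |a m| ≤ A) → 0 ≤ B → TailBdd X b B →
      ‖BL c mu α X Dn lam Ms a b‖ ≤ C * (A * B) *
        (Dn * X ^ ((1 : ℝ) / 3) * (√|α| * X ^ (c / 2)) +
          (1 + Real.log X) ^ 2 * (X ^ (1 - c / 2) / √|α|)) := by
  obtain ⟨C, hC, hv⟩ := ap_vdc c mu hc1 hc2 hmu hmu1
  refine ⟨C, hC, ?_⟩
  intro X Dn lam α Ms a b A B hX hDn hl1 hl2 hα hMs hA ha hB hb
  have hX0 : 0 < X := by linarith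
  have hαs : 0 < √|α| := Real.sqrt_pos.mpr (abs_pos.mpr hα)
  have hX13 : X ^ ((1 : ℝ) / 3) ≤ X := by
    calc X ^ ((1 : ℝ) / 3) ≤ X ^ (1 : ℝ) :=
          Real.rpow_le_rpow_of_exponent_le (by linarith) (by norm_num)
      _ = X := Real.rpow_one X
  set R : ℝ := √|α| * X ^ (c / 2) with hR
  set R' : ℝ := X ^ (1 - c / 2) / √|α| with hR'
  have hR0 : 0 ≤ R := by positivity
  have hR0' : 0 ≤ R' := by positivity
  have hinner : ∀ d ∈ (Finset.range (Dn + 1)).filter (fun d => ¬ 2 ∣ d), ∀ m ∈ Ms,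
      ‖∑ l ∈ LS mu X d m, (b l : ℂ) * e (α * ((m : ℝ) * l) ^ c)‖ ≤
        B * (C * (R + 1 / m * (1 / d) * R')) := by
    intro d hd m hm
    rw [Finset.mem_filter, Finset.mem_range] at hd
    have hd0 : 0 < d := by
      rcases Nat.eq_zero_or_pos d with h | h
      · exact absurd (h ▸ dvd_zero 2) hd.2
      · exact h
    have hm0 := (hMs m hm).1
    have hmR : (0 : ℝ) < m := by exact_mod_cast hm0
    have hdR : (0 : ℝ) < d := by exact_mod_cast hd0
    apply hb
    · intro l hlS
      have := (Finset.mem_Ioc.mp (mem_LS.mp hlS).1)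
      exact ⟨this.1, (Nat.le_floor_iff hX0.le).mp this.2⟩
    · intro j
      have hm1 : (m : ℝ) ^ (c / 2) ≠ 0 := by positivity
      have hβ : α * (m : ℝ) ^ c ≠ 0 := mul_ne_zero hα (by positivity)
      have hdY : (d : ℝ) ≤ X / m := by
        rw [le_div_iff₀ hmR]
        have h1 : (d : ℝ) ≤ Dn := by exact_mod_cast (by omega : d ≤ Dn)
        calc (d : ℝ) * m ≤ X ^ ((1 : ℝ) / 3) * X ^ ((1 : ℝ) / 3) :=
              mul_le_mul (h1.trans hDn) (hMs m hm).2 hmR.le (by positivity)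
          _ = X ^ ((2 : ℝ) / 3) := by rw [← Real.rpow_add hX0]; norm_num
          _ ≤ X ^ (1 : ℝ) := Real.rpow_le_rpow_of_exponent_le (by linarith) (by norm_num)
          _ = X := Real.rpow_one X
      have := hv (α * (m : ℝ) ^ c) d (X / m) _ hβ hd0 hdY
        ((LS_AP (mu := mu) (X := X) (m := m) hd.2).filter_ge j) (by
          intro l hlS
          have hc := (mem_LS.mp (Finset.mem_filter.mp hlS).1).2
          constructor
          · rw [← mul_div_assoc, div_lt_iff₀ hmR, mul_comm (l : ℝ)]; exact hc.1
          · rw [le_div_iff₀ hmR, mul_comm (l : ℝ)]; exact hc.2.1)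
      have hs : √|α * (m : ℝ) ^ c| = √|α| * (m : ℝ) ^ (c / 2) := by
        rw [abs_mul, Real.sqrt_mul (abs_nonneg _), abs_of_pos (Real.rpow_pos_of_pos hmR c)]
        congr 1
        rw [Real.sqrt_eq_rpow, ← Real.rpow_mul hmR.le]; congr 1; ring
      rw [hs, Real.div_rpow hX0.le hmR.le, Real.div_rpow hX0.le hmR.le] at this
      have e1 : √|α| * (m : ℝ) ^ (c / 2) * (X ^ (c / 2) / (m : ℝ) ^ (c / 2)) = R := by
        rw [hR]; field_simp
      have e2 : X ^ (1 - c / 2) / (m : ℝ) ^ (1 - c / 2) / (d * (√|α| * (m : ℝ) ^ (c / 2))) =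
          1 / m * (1 / d) * R' := by
        have : (m : ℝ) ^ (1 - c / 2) * (m : ℝ) ^ (c / 2) = m := by
          rw [← Real.rpow_add hmR]; simp
        rw [hR', div_div, show (m : ℝ) ^ (1 - c / 2) * (d * (√|α| * (m : ℝ) ^ (c / 2))) =
          ((m : ℝ) ^ (1 - c / 2) * (m : ℝ) ^ (c / 2)) * (d * √|α|) by ring, this]
        field_simp
      rw [e1, e2] at this
      refine le_trans (le_of_eq ?_) this
      congr 1
      apply Finset.sum_congr rfl
      intro l _
      rw [Real.mul_rpow hmR.le (Nat.cast_nonneg l), mul_assoc]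
  have hsumd : ‖BL c mu α X Dn lam Ms a b‖ ≤
      ∑ d ∈ (Finset.range (Dn + 1)).filter (fun d => ¬ 2 ∣ d), ∑ m ∈ Ms,
        A * (B * (C * (R + 1 / m * (1 / d) * R'))) := by
    unfold BL
    refine (norm_sum_le _ _).trans ?_
    rw [Finset.sum_filter]
    apply Finset.sum_le_sum
    intro d hd
    by_cases h2 : 2 ∣ d
    · rw [hl2 d h2]; simp [h2]
    · rw [if_pos h2, norm_mul, Complex.norm_real, Real.norm_eq_abs]
      refine le_trans (mul_le_of_le_one_left (norm_nonneg _) (hl1 d)) ?_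
      refine (norm_sum_le _ _).trans (Finset.sum_le_sum ?_)
      intro m hm
      rw [norm_mul, Complex.norm_real, Real.norm_eq_abs]
      exact mul_le_mul (ha m hm) (hinner d (Finset.mem_filter.mpr ⟨hd, h2⟩) m hm)
        (norm_nonneg _) hA
  refine hsumd.trans ?_
  set Ds := (Finset.range (Dn + 1)).filter (fun d => ¬ 2 ∣ d) with hDs
  have hDs0 : ∀ d ∈ Ds, 0 < d ∧ d ≤ Dn := by
    intro d hd
    rw [hDs, Finset.mem_filter, Finset.mem_range] at hd
    refine ⟨?_, by omega⟩
    rcases Nat.eq_zero_or_pos d with h | h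
    · exact absurd (h ▸ dvd_zero 2) hd.2
    · exact h
  have hDc : (Ds.card : ℝ) ≤ Dn := by
    have : Ds ⊆ Finset.Ioc 0 Dn := by
      intro d hd; rw [Finset.mem_Ioc]; exact hDs0 d hd
    have := Finset.card_le_card this
    simp at this
    exact_mod_cast this
  have hMc : (Ms.card : ℝ) ≤ X ^ ((1 : ℝ) / 3) := by
    have : Ms ⊆ Finset.Ioc 0 ⌊X ^ ((1 : ℝ) / 3)⌋₊ := by
      intro m hm; rw [Finset.mem_Ioc]; exact ⟨(hMs m hm).1, Nat.le_floor (hMs m hm).2⟩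
    have := Finset.card_le_card this
    simp only [Nat.card_Ioc, tsub_zero] at this
    exact (Nat.le_floor_iff (by positivity)).mp this
  have hSd : ∑ d ∈ Ds, (1 : ℝ) / d ≤ 1 + Real.log X := by
    apply sum_inv_le (by linarith)
    intro d hd
    have h1 : (d : ℝ) ≤ Dn := by exact_mod_cast (hDs0 d hd).2
    exact ⟨(hDs0 d hd).1, by linarith⟩
  have hSm : ∑ m ∈ Ms, (1 : ℝ) / m ≤ 1 + Real.log X := by
    apply sum_inv_le (by linarith)
    intro m hm
    exact ⟨(hMs m hm).1, (hMs m hm).2.trans hX13⟩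
  have hSm0 : 0 ≤ ∑ m ∈ Ms, (1 : ℝ) / m := Finset.sum_nonneg fun _ _ => by positivity
  have hlog : 0 ≤ 1 + Real.log X := by
    have := Real.log_nonneg (by linarith : (1 : ℝ) ≤ X); linarith
  have hfac : ∑ d ∈ Ds, ∑ m ∈ Ms, A * (B * (C * (R + 1 / m * (1 / d) * R'))) =
      C * (A * B) * (Ds.card * Ms.card * R +
        (∑ m ∈ Ms, (1 : ℝ) / m) * (∑ d ∈ Ds, (1 : ℝ) / d) * R') := by
    have : ∀ d ∈ Ds, ∑ m ∈ Ms, A * (B * (C * (R + 1 / (m : ℝ) * (1 / d) * R'))) =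
        C * (A * B) * (Ms.card * R + (∑ m ∈ Ms, (1 : ℝ) / m) * (1 / d) * R') := by
      intro d _
      rw [Finset.sum_mul, Finset.sum_mul, ← nsmul_eq_mul, ← Finset.sum_const,
        ← Finset.sum_add_distrib, Finset.mul_sum]
      apply Finset.sum_congr rfl
      intro m _; ring
    rw [Finset.sum_congr rfl this, ← Finset.mul_sum, Finset.sum_add_distrib, Finset.sum_const,
      ← Finset.sum_mul, ← Finset.mul_sum, nsmul_eq_mul]
    ring
  rw [hfac]
  apply mul_le_mul_of_nonneg_left _ (by positivity)
  apply add_le_add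
  · gcongr
  · rw [pow_two]
    gcongr

/-! ### Type II sums: Cauchy–Schwarz on a short block -/

/-- Write `d₁ = g u`, `d₂ = g v` with `g = gcd d₁ d₂`; then `lcm d₁ d₂ = g u v`, and the sum is at
most the cube of a harmonic sum. -/
lemma sum_inv_lcm_le {X : ℝ} (hX : 1 ≤ X) (s : Finset ℕ) (hs : ∀ n ∈ s, 0 < n ∧ (n : ℝ) ≤ X) :
    ∑ d₁ ∈ s, ∑ d₂ ∈ s, (1 : ℝ) / (Nat.lcm d₁ d₂) ≤ (1 + Real.log X) ^ 3 := by
  set N := ⌊X⌋₊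
  set I := Finset.Ioc 0 N with hI
  set φ : ℕ × ℕ → ℕ × ℕ × ℕ := fun p =>
    (Nat.gcd p.1 p.2, p.1 / Nat.gcd p.1 p.2, p.2 / Nat.gcd p.1 p.2) with hφ
  set F : ℕ × ℕ × ℕ → ℝ := fun t => (1 : ℝ) / t.1 * (1 / t.2.1 * (1 / t.2.2)) with hF
  have hval : ∀ p ∈ s ×ˢ s, (1 : ℝ) / (Nat.lcm p.1 p.2) = F (φ p) := by
    intro p hp
    rw [Finset.mem_product] at hp
    have h1 := (hs _ hp.1).1
    have hg : 0 < Nat.gcd p.1 p.2 := Nat.gcd_pos_of_pos_left _ h1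
    obtain ⟨a, ha⟩ := Nat.gcd_dvd_left p.1 p.2
    obtain ⟨b, hb⟩ := Nat.gcd_dvd_right p.1 p.2
    have hl : Nat.lcm p.1 p.2 = Nat.gcd p.1 p.2 * (p.1 / Nat.gcd p.1 p.2) *
        (p.2 / Nat.gcd p.1 p.2) := by
      rw [Nat.mul_div_cancel' (Nat.gcd_dvd_left _ _), Nat.lcm,
        Nat.mul_div_assoc _ (Nat.gcd_dvd_right _ _)]
    rw [hl]
    simp only [hF, hφ, one_div]
    rw [Nat.cast_mul, Nat.cast_mul, mul_inv, mul_inv]; ring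
  have hinj : Set.InjOn φ (s ×ˢ s : Finset (ℕ × ℕ)) := by
    intro p _ p' _ h
    simp only [hφ, Prod.mk.injEq] at h
    obtain ⟨h1, h2, h3⟩ := h
    have e1 := Nat.mul_div_cancel' (Nat.gcd_dvd_left p.1 p.2)
    have e2 := Nat.mul_div_cancel' (Nat.gcd_dvd_right p.1 p.2)
    have e3 := Nat.mul_div_cancel' (Nat.gcd_dvd_left p'.1 p'.2)
    have e4 := Nat.mul_div_cancel' (Nat.gcd_dvd_right p'.1 p'.2)
    apply Prod.ext
    · rw [← e1, ← e3, h2, h1]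
    · rw [← e2, ← e4, h3, h1]
  rw [← Finset.sum_product', Finset.sum_congr rfl hval, ← Finset.sum_image (f := F) hinj]
  have hsub : (s ×ˢ s).image φ ⊆ I ×ˢ I ×ˢ I := by
    intro t ht
    rw [Finset.mem_image] at ht
    obtain ⟨p, hp, rfl⟩ := ht
    rw [Finset.mem_product] at hp
    have h1 := hs _ hp.1
    have h2 := hs _ hp.2
    have hg : 0 < Nat.gcd p.1 p.2 := Nat.gcd_pos_of_pos_left _ h1.1
    have hg1 := Nat.le_of_dvd h1.1 (Nat.gcd_dvd_left p.1 p.2)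
    have hg2 := Nat.le_of_dvd h2.1 (Nat.gcd_dvd_right p.1 p.2)
    have n1 : p.1 ≤ N := Nat.le_floor h1.2
    have n2 : p.2 ≤ N := Nat.le_floor h2.2
    simp only [hφ, hI, Finset.mem_product, Finset.mem_Ioc]
    exact ⟨⟨hg, hg1.trans n1⟩, ⟨Nat.div_pos hg1 hg, (Nat.div_le_self _ _).trans n1⟩,
      ⟨Nat.div_pos hg2 hg, (Nat.div_le_self _ _).trans n2⟩⟩
  refine (Finset.sum_le_sum_of_subset_of_nonneg hsub (fun t _ _ => by
    simp only [hF]; positivity)).trans ?_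
  have hH : ∑ n ∈ I, (1 : ℝ) / n ≤ 1 + Real.log X := by
    apply sum_inv_le hX
    intro n hn
    rw [hI, Finset.mem_Ioc] at hn
    exact ⟨hn.1, (Nat.le_floor_iff (by linarith)).mp hn.2⟩
  have hH0 : 0 ≤ ∑ n ∈ I, (1 : ℝ) / n := Finset.sum_nonneg fun _ _ => by positivity
  have : ∑ t ∈ I ×ˢ I ×ˢ I, F t = (∑ n ∈ I, (1 : ℝ) / n) ^ 3 := by
    rw [Finset.sum_product]
    simp only [hF, Finset.sum_product, ← Finset.mul_sum, ← Finset.sum_mul]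
    ring
  rw [this]
  exact pow_le_pow_left₀ hH0 hH 3

open Classical in
/-- The weight `∑_{d ∣ ml + 2} λ(d) e(α (ml)^c)` of the pair `(m, l)`, zero unless
`ml ∈ (mu X, X]`. -/
noncomputable def Wt (c mu α X : ℝ) (Dn : ℕ) (lam : ℕ → ℝ) (m l : ℕ) : ℂ :=
  ∑ d ∈ Finset.range (Dn + 1),
    if Cond mu X d m l then (lam d : ℂ) * e (α * ((m : ℝ) * l) ^ c) else 0

lemma Wt_symm (c mu α X : ℝ) (Dn : ℕ) (lam : ℕ → ℝ) (m l : ℕ) :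
    Wt c mu α X Dn lam m l = Wt c mu α X Dn lam l m := by
  unfold Wt
  apply Finset.sum_congr rfl
  intro d _
  rw [mul_comm (m : ℝ)]
  by_cases h : Cond mu X d m l
  · rw [if_pos h, if_pos h.symm]
  · rw [if_neg h, if_neg (fun h' => h h'.symm)]

/-- The bilinear form with kernel `Wt` on `Ms × Ls`. -/
noncomputable def BB (c mu α X : ℝ) (Dn : ℕ) (lam : ℕ → ℝ) (Ms Ls : Finset ℕ) (a b : ℕ → ℝ) : ℂ :=
  ∑ m ∈ Ms, (a m : ℂ) * ∑ l ∈ Ls, (b l : ℂ) * Wt c mu α X Dn lam m l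

lemma BB_symm (c mu α X : ℝ) (Dn : ℕ) (lam : ℕ → ℝ) (Ms Ls : Finset ℕ) (a b : ℕ → ℝ) :
    BB c mu α X Dn lam Ms Ls a b = BB c mu α X Dn lam Ls Ms b a := by
  unfold BB
  simp only [Finset.mul_sum]
  rw [Finset.sum_comm]
  apply Finset.sum_congr rfl; intro l _
  apply Finset.sum_congr rfl; intro m _
  rw [Wt_symm]; ring

lemma BL_eq_BB (c mu α X : ℝ) (Dn : ℕ) (lam : ℕ → ℝ) (Ms : Finset ℕ) (a b : ℕ → ℝ) :
    BL c mu α X Dn lam Ms a b = BB c mu α X Dn lam Ms (Finset.Ioc 0 ⌊X⌋₊) a b := by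
  classical
  unfold BL BB Wt LS
  simp only [Finset.mul_sum, Finset.sum_filter]
  rw [Finset.sum_comm]
  apply Finset.sum_congr rfl; intro m _
  rw [Finset.sum_comm]
  apply Finset.sum_congr rfl; intro l _
  apply Finset.sum_congr rfl; intro d _
  by_cases h : Cond mu X d m l
  · simp only [if_pos h]; ring
  · simp [if_neg h]

/-- The odd moduli up to `Dn`. -/
def oddD (Dn : ℕ) : Finset ℕ := (Finset.range (Dn + 1)).filter (fun d => ¬ 2 ∣ d)

lemma mem_oddD {Dn d : ℕ} (h : d ∈ oddD Dn) : 0 < d ∧ d ≤ Dn ∧ ¬ 2 ∣ d := by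
  rw [oddD, Finset.mem_filter, Finset.mem_range] at h
  refine ⟨?_, by omega, h.2⟩
  rcases Nat.eq_zero_or_pos d with h' | h'
  · exact absurd (h' ▸ dvd_zero 2) h.2
  · exact h'

/-- The naturals in `(κ Y, Y]`. -/
noncomputable def rng (κ Y : ℝ) : Finset ℕ := (Finset.Ioc 0 ⌊Y⌋₊).filter (fun m => κ * Y < (m : ℝ))

lemma mem_rng {κ Y : ℝ} (hY : 0 ≤ Y) {m : ℕ} :
    m ∈ rng κ Y ↔ 0 < m ∧ (m : ℝ) ≤ Y ∧ κ * Y < m := by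
  rw [rng, Finset.mem_filter, Finset.mem_Ioc, Nat.le_floor_iff hY, and_assoc]

open Classical in
/-- The `m ∈ (κ P, P]` admissible simultaneously for `(d₁, l₁)` and `(d₂, l₂)`. -/
noncomputable def MS (mu X κ P : ℝ) (d₁ d₂ l₁ l₂ : ℕ) : Finset ℕ :=
  (rng κ P).filter (fun m => Cond mu X d₁ m l₁ ∧ Cond mu X d₂ m l₂)

lemma mem_MS {mu X κ P : ℝ} {d₁ d₂ l₁ l₂ m : ℕ} :
    m ∈ MS mu X κ P d₁ d₂ l₁ l₂ ↔ m ∈ rng κ P ∧ Cond mu X d₁ m l₁ ∧ Cond mu X d₂ m l₂ := by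
  simp [MS]

lemma MS_AP {mu X κ P : ℝ} (hP : 0 ≤ P) {d₁ d₂ l₁ l₂ : ℕ} (h₁ : ¬ 2 ∣ d₁) (h₂ : ¬ 2 ∣ d₂) :
    APset (Nat.lcm d₁ d₂) (MS mu X κ P d₁ d₂ l₁ l₂) := by
  constructor
  · intro x hx y hy
    rw [mem_MS] at hx hy
    have e1 := hx.2.1.symm.modEq h₁ hy.2.1.symm
    have e2 := hx.2.2.symm.modEq h₂ hy.2.2.symm
    rw [Nat.modEq_iff_dvd] at *
    rw [Nat.lcm]
    have := Int.coe_lcm_dvd e1 e2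
    simpa [Int.lcm, Nat.lcm] using this
  · intro x hx z hz y hxy hyz h
    rw [mem_MS, mem_rng hP] at *
    have h1 : (x : ℝ) ≤ y := by exact_mod_cast hxy
    have h2 : (y : ℝ) ≤ z := by exact_mod_cast hyz
    exact ⟨⟨by omega, by linarith [hz.1.2.1], by linarith [hx.1.2.2]⟩,
      (hx.2.1.symm.convex hz.2.1.symm hxy hyz (h.of_dvd (Nat.dvd_lcm_left _ _))).symm,
      (hx.2.2.symm.convex hz.2.2.symm hxy hyz (h.of_dvd (Nat.dvd_lcm_right _ _))).symm⟩

lemma Wt_odd (c mu α X : ℝ) (Dn : ℕ) (lam : ℕ → ℝ) (hl2 : ∀ d, 2 ∣ d → lam d = 0) (m l : ℕ)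
    [∀ d, Decidable (Cond mu X d m l)] :
    Wt c mu α X Dn lam m l = ∑ d ∈ oddD Dn,
      if Cond mu X d m l then (lam d : ℂ) * e (α * ((m : ℝ) * l) ^ c) else 0 := by
  unfold Wt oddD
  rw [Finset.sum_filter]
  apply Finset.sum_congr rfl
  intro d _
  by_cases h : 2 ∣ d
  · simp [h, hl2 d h]
  · rw [if_pos h]; congr

/-- Cauchy–Schwarz in `m`, followed by opening the square. -/
lemma block_cs (c mu α X κ P : ℝ) (hP : 0 ≤ P) (Dn : ℕ) (lam : ℕ → ℝ) (hl1 : ∀ d, |lam d| ≤ 1)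
    (hl2 : ∀ d, 2 ∣ d → lam d = 0) (J : Finset ℕ) (a b : ℕ → ℝ) (ha : ∀ m, |a m| ≤ 1)
    (hb : ∀ l, |b l| ≤ 1) :
    ‖BB c mu α X Dn lam (rng κ P) J a b‖ ^ 2 ≤ P * ∑ l₁ ∈ J, ∑ l₂ ∈ J,
      ∑ d₁ ∈ oddD Dn, ∑ d₂ ∈ oddD Dn,
        ‖∑ m ∈ MS mu X κ P d₁ d₂ l₁ l₂, e (α * ((l₁ : ℝ) ^ c - (l₂ : ℝ) ^ c) * (m : ℝ) ^ c)‖ := by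
  classical
  set w : ℕ → ℂ := fun m => ∑ l ∈ J, (b l : ℂ) * Wt c mu α X Dn lam m l with hw
  have hcs : ‖BB c mu α X Dn lam (rng κ P) J a b‖ ^ 2 ≤ P * ∑ m ∈ rng κ P, ‖w m‖ ^ 2 := by
    have h1 : ‖BB c mu α X Dn lam (rng κ P) J a b‖ ≤ ∑ m ∈ rng κ P, |a m| * ‖w m‖ := by
      unfold BB
      refine (norm_sum_le _ _).trans (le_of_eq ?_)
      apply Finset.sum_congr rfl; intro m _
      rw [norm_mul, Complex.norm_real, Real.norm_eq_abs]
    have h2 := Finset.sum_mul_sq_le_sq_mul_sq (rng κ P) (fun m => |a m|) (fun m => ‖w m‖)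
    have h3 : ∑ m ∈ rng κ P, |a m| ^ 2 ≤ P := by
      calc ∑ m ∈ rng κ P, |a m| ^ 2 ≤ ∑ m ∈ rng κ P, (1 : ℝ) := by
            apply Finset.sum_le_sum; intro m _
            exact pow_le_one₀ (abs_nonneg _) (ha m)
        _ = ((rng κ P).card : ℝ) := by simp
        _ ≤ ⌊P⌋₊ := by
            have := Finset.card_filter_le (Finset.Ioc 0 ⌊P⌋₊) (fun m => κ * P < (m : ℝ))
            rw [Nat.card_Ioc] at this
            exact_mod_cast this
        _ ≤ P := Nat.floor_le hP
    calc _ ≤ (∑ m ∈ rng κ P, |a m| * ‖w m‖) ^ 2 := pow_le_pow_left₀ (norm_nonneg _) h1 2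
      _ ≤ _ := h2
      _ ≤ _ := mul_le_mul_of_nonneg_right h3 (Finset.sum_nonneg fun _ _ => by positivity)
  refine hcs.trans (mul_le_mul_of_nonneg_left ?_ hP)
  have hsq : ((∑ m ∈ rng κ P, ‖w m‖ ^ 2 : ℝ) : ℂ) =
      ∑ m ∈ rng κ P, w m * (starRingEnd ℂ) (w m) := by
    push_cast
    apply Finset.sum_congr rfl; intro m _
    rw [Complex.mul_conj, Complex.normSq_eq_norm_sq]; push_cast; rfl
  have hexp : ∑ m ∈ rng κ P, w m * (starRingEnd ℂ) (w m) =
      ∑ l₁ ∈ J, ∑ l₂ ∈ J, ∑ d₁ ∈ oddD Dn, ∑ d₂ ∈ oddD Dn,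
        ((b l₁ * b l₂ * (lam d₁ * lam d₂) : ℝ) : ℂ) *
        ∑ m ∈ MS mu X κ P d₁ d₂ l₁ l₂,
          e (α * ((l₁ : ℝ) ^ c - (l₂ : ℝ) ^ c) * (m : ℝ) ^ c) := by
    have hpt : ∀ m, w m * (starRingEnd ℂ) (w m) =
      ∑ l₁ ∈ J, ∑ l₂ ∈ J, ∑ d₁ ∈ oddD Dn, ∑ d₂ ∈ oddD Dn,
        if Cond mu X d₁ m l₁ ∧ Cond mu X d₂ m l₂ then
        ((b l₁ * b l₂ * (lam d₁ * lam d₂) : ℝ) : ℂ) *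
          e (α * ((l₁ : ℝ) ^ c - (l₂ : ℝ) ^ c) * (m : ℝ) ^ c) else 0 := by
      intro m
      simp only [hw]
      rw [map_sum, Finset.sum_mul_sum]
      apply Finset.sum_congr rfl; intro l₁ _
      apply Finset.sum_congr rfl; intro l₂ _
      rw [Wt_odd _ _ _ _ _ _ hl2, Wt_odd _ _ _ _ _ _ hl2, map_mul, map_sum, Complex.conj_ofReal,
        mul_mul_mul_comm, Finset.sum_mul_sum, Finset.mul_sum]
      apply Finset.sum_congr rfl; intro d₁ _
      rw [Finset.mul_sum]
      apply Finset.sum_congr rfl; intro d₂ _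
      by_cases h1 : Cond mu X d₁ m l₁
      · by_cases h2 : Cond mu X d₂ m l₂
        · rw [if_pos h1, if_pos h2, if_pos ⟨h1, h2⟩, map_mul, Complex.conj_ofReal, ← e_neg]
          have : α * ((l₁ : ℝ) ^ c - (l₂ : ℝ) ^ c) * (m : ℝ) ^ c =
              α * ((m : ℝ) * l₁) ^ c + -(α * ((m : ℝ) * l₂) ^ c) := by
            rw [Real.mul_rpow (Nat.cast_nonneg _) (Nat.cast_nonneg _),
              Real.mul_rpow (Nat.cast_nonneg _) (Nat.cast_nonneg _)]; ring
          rw [this, e_add]; push_cast; ring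
        · simp [h2]
      · simp [h1]
    simp only [hpt]
    rw [Finset.sum_comm]
    apply Finset.sum_congr rfl; intro l₁ _
    rw [Finset.sum_comm]
    apply Finset.sum_congr rfl; intro l₂ _
    rw [Finset.sum_comm]
    apply Finset.sum_congr rfl; intro d₁ _
    rw [Finset.sum_comm]
    apply Finset.sum_congr rfl; intro d₂ _
    rw [← Finset.sum_filter, Finset.mul_sum, MS]
  have hnorm : ∑ m ∈ rng κ P, ‖w m‖ ^ 2 =
      ‖∑ m ∈ rng κ P, w m * (starRingEnd ℂ) (w m)‖ := by
    rw [← hsq, Complex.norm_real, Real.norm_eq_abs,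
      abs_of_nonneg (Finset.sum_nonneg fun _ _ => by positivity)]
  rw [hnorm, hexp]
  refine (norm_sum_le _ _).trans (Finset.sum_le_sum fun l₁ _ => ?_)
  refine (norm_sum_le _ _).trans (Finset.sum_le_sum fun l₂ _ => ?_)
  refine (norm_sum_le _ _).trans (Finset.sum_le_sum fun d₁ _ => ?_)
  refine (norm_sum_le _ _).trans (Finset.sum_le_sum fun d₂ _ => ?_)
  rw [norm_mul, Complex.norm_real, Real.norm_eq_abs]
  apply mul_le_of_le_one_left (norm_nonneg _)
  rw [abs_mul, abs_mul, abs_mul]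
  exact mul_le_one₀ (mul_le_one₀ (hb _) (abs_nonneg _) (hb _)) (by positivity)
    (mul_le_one₀ (hl1 _) (abs_nonneg _) (hl1 _))

/-! ### Type II sums: the block estimate -/

lemma oddD_sub (Dn : ℕ) : oddD Dn ⊆ Finset.Ioc 0 Dn := by
  intro d hd
  have := mem_oddD hd
  rw [Finset.mem_Ioc]; exact ⟨this.1, this.2.1⟩

lemma oddD_card (Dn : ℕ) : ((oddD Dn).card : ℝ) ≤ Dn := by
  have := Finset.card_le_card (oddD_sub Dn)
  rw [Nat.card_Ioc] at this
  exact_mod_cast this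

lemma lcm_oddD {Dn d₁ d₂ : ℕ} {P : ℝ} (hDP : (Dn : ℝ) ^ 2 ≤ P) (h₁ : d₁ ∈ oddD Dn)
    (h₂ : d₂ ∈ oddD Dn) : 0 < Nat.lcm d₁ d₂ ∧ (Nat.lcm d₁ d₂ : ℝ) ≤ P := by
  have a₁ := mem_oddD h₁
  have a₂ := mem_oddD h₂
  refine ⟨Nat.lcm_pos a₁.1 a₂.1, le_trans ?_ hDP⟩
  have : Nat.lcm d₁ d₂ ≤ Dn ^ 2 := by
    rw [pow_two]
    exact (Nat.le_of_dvd (Nat.mul_pos a₁.1 a₂.1) (Nat.lcm_dvd_mul d₁ d₂)).trans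
      (Nat.mul_le_mul a₁.2.1 a₂.2.1)
  exact_mod_cast this

lemma sum_inv_lcm_oddD {X : ℝ} (hX : 1 ≤ X) {Dn : ℕ} (hD : (Dn : ℝ) ≤ X) :
    ∑ d₁ ∈ oddD Dn, ∑ d₂ ∈ oddD Dn, (1 : ℝ) / (Nat.lcm d₁ d₂) ≤ (1 + Real.log X) ^ 3 := by
  apply sum_inv_lcm_le hX
  intro n hn
  have := mem_oddD hn
  exact ⟨this.1, le_trans (by exact_mod_cast this.2.1) hD⟩

/-- The trivial bound for the inner sums over `m`, used on the diagonal `l₁ = l₂`. -/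
lemma pair_diag (c mu X κ P β : ℝ) (hX : 1 ≤ X) (Dn : ℕ) (hD : (Dn : ℝ) ≤ X) (hP : 0 < P)
    (hDP : (Dn : ℝ) ^ 2 ≤ P) (l₁ l₂ : ℕ) :
    ∑ d₁ ∈ oddD Dn, ∑ d₂ ∈ oddD Dn,
      ‖∑ m ∈ MS mu X κ P d₁ d₂ l₁ l₂, e (β * (m : ℝ) ^ c)‖ ≤ 2 * P * (1 + Real.log X) ^ 3 := by
  calc _ ≤ ∑ d₁ ∈ oddD Dn, ∑ d₂ ∈ oddD Dn, 2 * P * ((1 : ℝ) / (Nat.lcm d₁ d₂)) := by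
        refine Finset.sum_le_sum fun d₁ h₁ => Finset.sum_le_sum fun d₂ h₂ => ?_
        obtain ⟨hq, hqP⟩ := lcm_oddD hDP h₁ h₂
        have hcard := APset.card_le (MS_AP (mu := mu) (X := X) (κ := κ) (l₁ := l₁) (l₂ := l₂) hP.le
          (mem_oddD h₁).2.2 (mem_oddD h₂).2.2) hq hP.le
          (fun x hx => ((mem_rng hP.le).mp (mem_MS.mp hx).1).2.1)
        have hq' : (0 : ℝ) < Nat.lcm d₁ d₂ := by exact_mod_cast hq
        calc _ ≤ ∑ m ∈ MS mu X κ P d₁ d₂ l₁ l₂, ‖e (β * (m : ℝ) ^ c)‖ := norm_sum_le _ _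
          _ = ((MS mu X κ P d₁ d₂ l₁ l₂).card : ℝ) := by simp [norm_e]
          _ ≤ P / Nat.lcm d₁ d₂ + 1 := hcard
          _ ≤ P / Nat.lcm d₁ d₂ + P / Nat.lcm d₁ d₂ := by
              have : 1 ≤ P / Nat.lcm d₁ d₂ := (one_le_div hq').mpr hqP
              linarith
          _ = _ := by ring
    _ = 2 * P * ∑ d₁ ∈ oddD Dn, ∑ d₂ ∈ oddD Dn, (1 : ℝ) / (Nat.lcm d₁ d₂) := by
        simp only [Finset.mul_sum]
    _ ≤ _ := mul_le_mul_of_nonneg_left (sum_inv_lcm_oddD hX hD) (by positivity)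

/-- The second derivative test for the inner sums over `m`, used off the diagonal with
`β = α (l₁ ^ c - l₂ ^ c)`. -/
lemma pair_off (c κ : ℝ) (hc1 : 1 < c) (hc2 : c < 2) (hκ0 : 0 < κ) (hκ1 : κ < 1) :
    ∃ C : ℝ, 0 < C ∧ ∀ (mu X P β : ℝ) (Dn l₁ l₂ : ℕ), 1 ≤ X → (Dn : ℝ) ≤ X → 0 < P →
      (Dn : ℝ) ^ 2 ≤ P → β ≠ 0 →
      ∑ d₁ ∈ oddD Dn, ∑ d₂ ∈ oddD Dn,
        ‖∑ m ∈ MS mu X κ P d₁ d₂ l₁ l₂, e (β * (m : ℝ) ^ c)‖ ≤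
      C * ((Dn : ℝ) ^ 2 * √|β| * P ^ (c / 2) + (1 + Real.log X) ^ 3 * (P ^ (1 - c / 2) / √|β|)) := by
  obtain ⟨C, hC, h⟩ := ap_vdc c κ hc1 hc2 hκ0 hκ1
  refine ⟨C, hC, ?_⟩
  intro mu X P β Dn l₁ l₂ hX hD hP hDP hβ
  have hb : 0 < √|β| := Real.sqrt_pos.mpr (abs_pos.mpr hβ)
  calc _ ≤ ∑ d₁ ∈ oddD Dn, ∑ d₂ ∈ oddD Dn, (C * (√|β| * P ^ (c / 2)) +
          C * (P ^ (1 - c / 2) / √|β|) * ((1 : ℝ) / (Nat.lcm d₁ d₂))) := by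
        refine Finset.sum_le_sum fun d₁ h₁ => Finset.sum_le_sum fun d₂ h₂ => ?_
        obtain ⟨hq, hqP⟩ := lcm_oddD hDP h₁ h₂
        refine (h β (Nat.lcm d₁ d₂) P (MS mu X κ P d₁ d₂ l₁ l₂) hβ hq hqP
          (MS_AP hP.le (mem_oddD h₁).2.2 (mem_oddD h₂).2.2) ?_).trans (le_of_eq ?_)
        · intro m hm
          have := (mem_rng hP.le).mp (mem_MS.mp hm).1
          exact ⟨this.2.2, this.2.1⟩
        · have hq' : (Nat.lcm d₁ d₂ : ℝ) ≠ 0 := by exact_mod_cast hq.ne'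
          field_simp
    _ = ((oddD Dn).card : ℝ) ^ 2 * (C * (√|β| * P ^ (c / 2))) + C * (P ^ (1 - c / 2) / √|β|) *
          ∑ d₁ ∈ oddD Dn, ∑ d₂ ∈ oddD Dn, (1 : ℝ) / (Nat.lcm d₁ d₂) := by
        simp only [Finset.mul_sum, Finset.sum_add_distrib, Finset.sum_const, nsmul_eq_mul]
        ring
    _ ≤ (Dn : ℝ) ^ 2 * (C * (√|β| * P ^ (c / 2))) + C * (P ^ (1 - c / 2) / √|β|) *
          (1 + Real.log X) ^ 3 := by
        have h1 := oddD_card Dn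
        have h2 := sum_inv_lcm_oddD hX hD
        gcongr
    _ = _ := by ring

/-- Mean value bounds for `l₁^c - l₂^c` on `(κ Q, Q]`. -/
lemma rpow_diff_bounds (c κ Q x y : ℝ) (hc1 : 1 < c) (hκ0 : 0 < κ) (hQ : 0 < Q)
    (hx : κ * Q < x) (hxQ : x ≤ Q) (hy : κ * Q < y) (hyQ : y ≤ Q) (hxy : x ≠ y) :
    c * κ ^ (c - 1) * (Q ^ (c - 1) * |x - y|) ≤ |x ^ c - y ^ c| ∧
      |x ^ c - y ^ c| ≤ c * (Q ^ (c - 1) * |x - y|) := by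
  wlog hlt : y < x generalizing x y
  · have := this y x hy hyQ hx hxQ hxy.symm (lt_of_le_of_ne (not_lt.mp hlt) hxy)
    rwa [abs_sub_comm y x, abs_sub_comm (y ^ c)] at this
  have hy0 : 0 < y := lt_trans (by positivity) hy
  obtain ⟨u, hu1, hu2, hu⟩ := rpow_mvt c y x hy0 hlt
  have hu0 : 0 < u := hy0.trans hu1
  have hd : 0 < x - y := by linarith
  rw [hu, abs_of_pos hd, abs_of_pos (by positivity)]
  have h1 : (κ * Q) ^ (c - 1) ≤ u ^ (c - 1) :=
    Real.rpow_le_rpow (by positivity) (by linarith) (by linarith)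
  have h2 : u ^ (c - 1) ≤ Q ^ (c - 1) := Real.rpow_le_rpow hu0.le (by linarith) (by linarith)
  rw [Real.mul_rpow hκ0.le hQ.le] at h1
  constructor
  · calc _ = c * (κ ^ (c - 1) * Q ^ (c - 1)) * (x - y) := by ring
      _ ≤ _ := by gcongr
  · calc _ ≤ c * Q ^ (c - 1) * (x - y) := by gcongr
      _ = _ := by ring

lemma sum_inv_sqrt_le (n : ℕ) : ∑ h ∈ Finset.Ioc 0 n, 1 / √(h : ℝ) ≤ 2 * √(n : ℝ) := by
  induction n with
  | zero => simp
  | succ n ih =>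
    rw [← Finset.insert_Ioc_right_eq_Ioc_add_one (Nat.zero_le n), Finset.sum_insert (by simp)]
    have h0 : (0 : ℝ) ≤ n := Nat.cast_nonneg n
    have h1 : 0 < √((n + 1 : ℕ) : ℝ) := Real.sqrt_pos.mpr (by positivity)
    have h2 : √(n : ℝ) ≤ √((n + 1 : ℕ) : ℝ) := Real.sqrt_le_sqrt (by push_cast; linarith)
    have h3 : √((n + 1 : ℕ) : ℝ) ^ 2 = n + 1 := by rw [Real.sq_sqrt (by positivity)]; push_cast; ring
    have h4 : √(n : ℝ) ^ 2 = n := Real.sq_sqrt h0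
    have h5 : 1 / √((n + 1 : ℕ) : ℝ) ≤ 2 * (√((n + 1 : ℕ) : ℝ) - √(n : ℝ)) := by
      rw [div_le_iff₀ h1]
      nlinarith [sq_nonneg (√((n + 1 : ℕ) : ℝ) - √(n : ℝ))]
    linarith

lemma window_card {J : Finset ℕ} {t H : ℕ} (hJ : ∀ x ∈ J, t ≤ x ∧ x < t + H) :
    (J.card : ℝ) ≤ H := by
  have : J ⊆ Finset.Ico t (t + H) := fun x hx => Finset.mem_Ico.mpr (hJ x hx)
  have := Finset.card_le_card this
  rw [Nat.card_Ico] at this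
  exact_mod_cast this.trans (by omega)

lemma window_sum {J : Finset ℕ} {t H : ℕ} (hJ : ∀ x ∈ J, t ≤ x ∧ x < t + H) {x : ℕ} (hx : x ∈ J) :
    ∑ y ∈ J.filter (fun y => y ≠ x), 1 / √|(x : ℝ) - y| ≤ 4 * √(H : ℝ) := by
  have hsplit : J.filter (fun y => y ≠ x) = J.filter (fun y => y < x) ∪ J.filter (fun y => x < y) := by
    rw [← Finset.filter_or]
    apply Finset.filter_congr
    intro y _; omega
  have hdis : Disjoint (J.filter (fun y => y < x)) (J.filter (fun y => x < y)) := by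
    apply Finset.disjoint_filter.mpr
    intro y _ h; omega
  rw [hsplit, Finset.sum_union hdis]
  have key : ∀ (S : Finset ℕ) (f : ℕ → ℕ), Set.InjOn f S →
      (∀ y ∈ S, 0 < f y ∧ f y ≤ H ∧ |(x : ℝ) - y| = f y) →
      ∑ y ∈ S, 1 / √|(x : ℝ) - y| ≤ 2 * √(H : ℝ) := by
    intro S f hinj hf
    calc _ = ∑ y ∈ S, 1 / √(f y : ℝ) := Finset.sum_congr rfl fun y hy => by rw [(hf y hy).2.2]
      _ = ∑ h ∈ S.image f, 1 / √(h : ℝ) := (Finset.sum_image (f := fun h : ℕ => 1 / √(h : ℝ)) hinj).symm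
      _ ≤ ∑ h ∈ Finset.Ioc 0 H, 1 / √(h : ℝ) := by
          apply Finset.sum_le_sum_of_subset_of_nonneg
          · intro h hh
            obtain ⟨y, hy, rfl⟩ := Finset.mem_image.mp hh
            exact Finset.mem_Ioc.mpr ⟨(hf y hy).1, (hf y hy).2.1⟩
          · intro i _ _; positivity
      _ ≤ _ := sum_inv_sqrt_le H
  have hxJ := hJ x hx
  have h1 := key (J.filter (fun y => y < x)) (fun y => x - y) (by
    intro y hy z hz h
    simp only [Finset.coe_filter, Set.mem_ofPred_eq] at hy hz
    simp only at h; omega) (by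
    intro y hy
    have h := (Finset.mem_filter.mp hy)
    have hyJ := hJ y h.1
    have hlt := h.2
    refine ⟨by omega, by omega, ?_⟩
    have : (y : ℝ) < x := by exact_mod_cast hlt
    rw [Nat.cast_sub hlt.le, abs_of_pos (by linarith)])
  have h2 := key (J.filter (fun y => x < y)) (fun y => y - x) (by
    intro y hy z hz h
    simp only [Finset.coe_filter, Set.mem_ofPred_eq] at hy hz
    simp only at h; omega) (by
    intro y hy
    have h := (Finset.mem_filter.mp hy)
    have hyJ := hJ y h.1
    have hlt := h.2
    refine ⟨by omega, by omega, ?_⟩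
    have : (x : ℝ) < y := by exact_mod_cast hlt
    rw [Nat.cast_sub hlt.le, abs_of_neg (by linarith)]; ring)
  linarith

/-- Summing a bound `U √|x - y| + V / √|x - y|` off the diagonal, and `G` on it, over a window of
length `H`. -/
lemma window_double {J : Finset ℕ} {t H : ℕ} (hJ : ∀ x ∈ J, t ≤ x ∧ x < t + H)
    (g : ℕ → ℕ → ℝ) (G U V : ℝ) (hG : 0 ≤ G) (hU : 0 ≤ U) (hV : 0 ≤ V)
    (hd : ∀ x ∈ J, g x x ≤ G)
    (ho : ∀ x ∈ J, ∀ y ∈ J, x ≠ y → g x y ≤ U * √|(x : ℝ) - y| + V * (1 / √|(x : ℝ) - y|)) :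
    ∑ x ∈ J, ∑ y ∈ J, g x y ≤ H * (G + U * (H * √(H : ℝ)) + V * (4 * √(H : ℝ))) := by
  have hcard := window_card hJ
  have hH : (0 : ℝ) ≤ H := Nat.cast_nonneg H
  have hin : ∀ x ∈ J, ∑ y ∈ J, g x y ≤ G + U * (H * √(H : ℝ)) + V * (4 * √(H : ℝ)) := by
    intro x hx
    rw [← Finset.sum_filter_add_sum_filter_not J (fun y => y ≠ x)]
    have h1 : ∑ y ∈ J.filter (fun y => ¬ y ≠ x), g x y ≤ G := by
      have : J.filter (fun y => ¬ y ≠ x) = {x} := by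
        ext y; simp only [Finset.mem_filter, not_not, Finset.mem_singleton]
        exact ⟨fun h => h.2, fun h => ⟨h ▸ hx, h⟩⟩
      rw [this, Finset.sum_singleton]; exact hd x hx
    have h2 : ∑ y ∈ J.filter (fun y => y ≠ x), g x y ≤
        U * (H * √(H : ℝ)) + V * (4 * √(H : ℝ)) := by
      calc _ ≤ ∑ y ∈ J.filter (fun y => y ≠ x), (U * √(H : ℝ) + V * (1 / √|(x : ℝ) - y|)) := by
            apply Finset.sum_le_sum
            intro y hy
            rw [Finset.mem_filter] at hy
            refine (ho x hx y hy.1 (Ne.symm hy.2)).trans ?_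
            have : |(x : ℝ) - y| ≤ H := by
              have a := hJ x hx
              have b := hJ y hy.1
              have a1 : (t : ℝ) ≤ x := by exact_mod_cast a.1
              have a2 : (x : ℝ) ≤ t + H := by exact_mod_cast a.2.le
              have b1 : (t : ℝ) ≤ y := by exact_mod_cast b.1
              have b2 : (y : ℝ) ≤ t + H := by exact_mod_cast b.2.le
              rw [abs_le]; constructor <;> linarith
            gcongr
        _ = ((J.filter (fun y => y ≠ x)).card : ℝ) * (U * √(H : ℝ)) +
            V * ∑ y ∈ J.filter (fun y => y ≠ x), 1 / √|(x : ℝ) - y| := by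
            rw [Finset.sum_add_distrib, Finset.sum_const, nsmul_eq_mul, Finset.mul_sum]
        _ ≤ H * (U * √(H : ℝ)) + V * (4 * √(H : ℝ)) := by
            have h3 : ((J.filter (fun y => y ≠ x)).card : ℝ) ≤ H :=
              le_trans (by exact_mod_cast Finset.card_filter_le _ _) hcard
            have h4 := window_sum hJ hx
            gcongr
        _ = _ := by ring
    linarith
  calc _ ≤ ∑ x ∈ J, (G + U * (H * √(H : ℝ)) + V * (4 * √(H : ℝ))) := Finset.sum_le_sum hin
    _ = (J.card : ℝ) * (G + U * (H * √(H : ℝ)) + V * (4 * √(H : ℝ))) := by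
        rw [Finset.sum_const, nsmul_eq_mul]
    _ ≤ _ := by gcongr

/-- The block estimate with the second variable confined to a window of length `H`. -/
lemma window_block (c κ : ℝ) (hc1 : 1 < c) (hc2 : c < 2) (hκ0 : 0 < κ) (hκ1 : κ < 1) :
    ∃ C : ℝ, 0 < C ∧ ∀ (mu α X P Q : ℝ) (Dn : ℕ) (lam : ℕ → ℝ) (J : Finset ℕ) (t H : ℕ)
      (a b : ℕ → ℝ), α ≠ 0 → 1 ≤ X → (Dn : ℝ) ≤ X → 0 < P → (Dn : ℝ) ^ 2 ≤ P → 0 < Q →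
      (∀ d, |lam d| ≤ 1) → (∀ d, 2 ∣ d → lam d = 0) → (∀ m, |a m| ≤ 1) → (∀ l, |b l| ≤ 1) →
      J ⊆ rng κ Q → (∀ x ∈ J, t ≤ x ∧ x < t + H) →
      ‖BB c mu α X Dn lam (rng κ P) J a b‖ ^ 2 ≤ C * (P * (H *
        (P * (1 + Real.log X) ^ 3 +
          (Dn : ℝ) ^ 2 * (√|α| * Q ^ ((c - 1) / 2)) * P ^ (c / 2) * (H * √(H : ℝ)) +
          (1 + Real.log X) ^ 3 * (P ^ (1 - c / 2) / (√|α| * Q ^ ((c - 1) / 2))) * √(H : ℝ)))) := by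
  obtain ⟨C, hC, hoff⟩ := pair_off c κ hc1 hc2 hκ0 hκ1
  have hc0 : 0 < c := by linarith
  set s := √(c * κ ^ (c - 1)) with hs
  have hs0 : 0 < s := Real.sqrt_pos.mpr (by positivity)
  set C₀ := 2 + C * √c + 4 * (C / s) with hC₀
  have e1 : C * √c ≤ C₀ := by
    rw [hC₀]; have : 0 < 4 * (C / s) := by positivity
    linarith
  have e2 : 4 * (C / s) ≤ C₀ := by
    rw [hC₀]; have : 0 ≤ C * √c := by positivity
    linarith
  have e3 : 2 ≤ C₀ := by
    rw [hC₀]; have : 0 ≤ C * √c + 4 * (C / s) := by positivity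
    linarith
  refine ⟨C₀, by linarith, ?_⟩
  intro mu α X P Q Dn lam J t H a b hα hX hD hP hDP hQ hl1 hl2 ha hb hJQ hJ
  set L := 1 + Real.log X with hL
  have hL0 : 0 < L := by rw [hL]; linarith [Real.log_nonneg hX]
  have hA : 0 < √|α| := Real.sqrt_pos.mpr (abs_pos.mpr hα)
  have hR : 0 < Q ^ ((c - 1) / 2) := Real.rpow_pos_of_pos hQ _
  set R := Q ^ ((c - 1) / 2) with hRdef
  have hRsq : √(Q ^ (c - 1)) = R := by
    rw [hRdef, Real.sqrt_eq_rpow, ← Real.rpow_mul hQ.le]; congr 1; ring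
  refine (block_cs c mu α X κ P hP.le Dn lam hl1 hl2 J a b ha hb).trans ?_
  have hw := window_double hJ (fun l₁ l₂ => ∑ d₁ ∈ oddD Dn, ∑ d₂ ∈ oddD Dn,
        ‖∑ m ∈ MS mu X κ P d₁ d₂ l₁ l₂, e (α * ((l₁ : ℝ) ^ c - (l₂ : ℝ) ^ c) * (m : ℝ) ^ c)‖)
    (2 * P * L ^ 3) (C * √c * ((Dn : ℝ) ^ 2 * (√|α| * R) * P ^ (c / 2)))
    (C / s * (L ^ 3 * (P ^ (1 - c / 2) / (√|α| * R)))) (by positivity) (by positivity)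
    (by positivity) (fun x _ => pair_diag c mu X κ P _ hX Dn hD hP hDP x x) (by
      intro x hx y hy hxy
      have hx' := (mem_rng hQ.le).mp (hJQ hx)
      have hy' := (mem_rng hQ.le).mp (hJQ hy)
      have hxy' : (x : ℝ) ≠ y := by exact_mod_cast hxy
      obtain ⟨b1, b2⟩ := rpow_diff_bounds c κ Q x y hc1 hκ0 hQ hx'.2.2 hx'.2.1 hy'.2.2 hy'.2.1 hxy'
      have hh : 0 < |(x : ℝ) - y| := abs_pos.mpr (sub_ne_zero.mpr hxy')
      have hh' : 0 < √|(x : ℝ) - y| := Real.sqrt_pos.mpr hh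
      have hlow : √|α| * (s * (R * √|(x : ℝ) - y|)) ≤ √|α * ((x : ℝ) ^ c - (y : ℝ) ^ c)| := by
        rw [abs_mul, Real.sqrt_mul (abs_nonneg _)]
        refine mul_le_mul_of_nonneg_left ?_ hA.le
        rw [hs, ← hRsq, ← Real.sqrt_mul (by positivity), ← Real.sqrt_mul (by positivity)]
        exact Real.sqrt_le_sqrt b1
      have hup : √|α * ((x : ℝ) ^ c - (y : ℝ) ^ c)| ≤ √|α| * (√c * (R * √|(x : ℝ) - y|)) := by
        rw [abs_mul, Real.sqrt_mul (abs_nonneg _)]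
        refine mul_le_mul_of_nonneg_left ?_ hA.le
        rw [← hRsq, ← Real.sqrt_mul (by positivity), ← Real.sqrt_mul (by positivity)]
        exact Real.sqrt_le_sqrt b2
      have hpos : 0 < √|α| * (s * (R * √|(x : ℝ) - y|)) := by positivity
      have hβ : α * ((x : ℝ) ^ c - (y : ℝ) ^ c) ≠ 0 := by
        intro h0
        rw [h0, abs_zero, Real.sqrt_zero] at hlow
        linarith
      refine (hoff mu X P _ Dn x y hX hD hP hDP hβ).trans ?_
      rw [← hL]
      calc _ ≤ C * ((Dn : ℝ) ^ 2 * (√|α| * (√c * (R * √|(x : ℝ) - y|))) * P ^ (c / 2) +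
            L ^ 3 * (P ^ (1 - c / 2) / (√|α| * (s * (R * √|(x : ℝ) - y|))))) := by
            gcongr
        _ = _ := by field_simp)
  refine (mul_le_mul_of_nonneg_left hw hP.le).trans ?_
  have hH : (0 : ℝ) ≤ H := Nat.cast_nonneg H
  have f1 : 0 ≤ P * L ^ 3 := by positivity
  have f2 : 0 ≤ (Dn : ℝ) ^ 2 * (√|α| * R) * P ^ (c / 2) * (H * √(H : ℝ)) := by positivity
  have f3 : 0 ≤ L ^ 3 * (P ^ (1 - c / 2) / (√|α| * R)) * √(H : ℝ) := by positivity
  calc _ = P * (H * (2 * (P * L ^ 3) +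
        (C * √c) * ((Dn : ℝ) ^ 2 * (√|α| * R) * P ^ (c / 2) * (H * √(H : ℝ))) +
        (4 * (C / s)) * (L ^ 3 * (P ^ (1 - c / 2) / (√|α| * R)) * √(H : ℝ)))) := by ring
    _ ≤ P * (H * (C₀ * (P * L ^ 3) +
        C₀ * ((Dn : ℝ) ^ 2 * (√|α| * R) * P ^ (c / 2) * (H * √(H : ℝ))) +
        C₀ * (L ^ 3 * (P ^ (1 - c / 2) / (√|α| * R)) * √(H : ℝ)))) := by gcongr
    _ = _ := by ring

/-- Splitting the range of the second variable into windows of length `H`. -/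
lemma BB_windows (c mu α X κ P Q : ℝ) (Dn : ℕ) (lam : ℕ → ℝ) (H : ℕ) (hH : 0 < H)
    (hQ : 0 < Q) (hHQ : (H : ℝ) ≤ Q) (a b : ℕ → ℝ) (K : ℝ)
    (hK : ∀ J t, J ⊆ rng κ Q → (∀ x ∈ J, t ≤ x ∧ x < t + H) →
      ‖BB c mu α X Dn lam (rng κ P) J a b‖ ^ 2 ≤ K) :
    ‖BB c mu α X Dn lam (rng κ P) (rng κ Q) a b‖ ^ 2 ≤ 4 * (Q / H) ^ 2 * K := by
  set T := Finset.range (⌊Q⌋₊ / H + 1) with hT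
  set J : ℕ → Finset ℕ := fun i => (rng κ Q).filter (fun l => l / H = i) with hJ
  have hH' : (0 : ℝ) < H := by exact_mod_cast hH
  have hsplit : BB c mu α X Dn lam (rng κ P) (rng κ Q) a b =
      ∑ i ∈ T, BB c mu α X Dn lam (rng κ P) (J i) a b := by
    unfold BB
    rw [Finset.sum_comm]
    apply Finset.sum_congr rfl; intro m _
    rw [← Finset.mul_sum]
    congr 1
    rw [hJ]
    symm
    apply Finset.sum_fiberwise_of_maps_to
    intro l hl
    rw [hT, Finset.mem_range]
    have h1 := (mem_rng hQ.le).mp hl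
    have h2 : l ≤ ⌊Q⌋₊ := Nat.le_floor h1.2.1
    exact Nat.lt_succ_of_le (Nat.div_le_div_right h2)
  have hb : ∀ i ∈ T, ‖BB c mu α X Dn lam (rng κ P) (J i) a b‖ ^ 2 ≤ K := by
    intro i _
    apply hK (J i) (i * H) (Finset.filter_subset _ _)
    intro x hx
    have h := (Finset.mem_filter.mp hx).2
    have h2 := Nat.div_add_mod x H
    have h3 := Nat.mod_lt x hH
    rw [h, mul_comm] at h2
    omega
  have hK0 : 0 ≤ K := le_trans (by positivity) (hb 0 (by simp [hT]))
  have hcard : (T.card : ℝ) ≤ 2 * (Q / H) := by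
    rw [hT, Finset.card_range]
    push_cast
    have h1 : ((⌊Q⌋₊ / H : ℕ) : ℝ) ≤ Q / H :=
      Nat.cast_div_le.trans (div_le_div_of_nonneg_right (Nat.floor_le hQ.le) hH'.le)
    have h2 : 1 ≤ Q / H := (one_le_div hH').mpr hHQ
    linarith
  calc _ = ‖∑ i ∈ T, BB c mu α X Dn lam (rng κ P) (J i) a b‖ ^ 2 := by rw [hsplit]
    _ ≤ (∑ i ∈ T, ‖BB c mu α X Dn lam (rng κ P) (J i) a b‖) ^ 2 :=
        pow_le_pow_left₀ (norm_nonneg _) (norm_sum_le _ _) 2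
    _ ≤ T.card * ∑ i ∈ T, ‖BB c mu α X Dn lam (rng κ P) (J i) a b‖ ^ 2 := sq_sum_le_card_mul_sum_sq
    _ ≤ T.card * (T.card * K) := by
        gcongr
        calc _ ≤ ∑ i ∈ T, K := Finset.sum_le_sum hb
          _ = _ := by rw [Finset.sum_const, nsmul_eq_mul]
    _ ≤ (2 * (Q / H)) * ((2 * (Q / H)) * K) := by gcongr
    _ = _ := by ring

/-- The bound for a full block `(κ P, P] × (κ Q, Q]`, cut into windows of length `H`. -/
lemma block_bound (c κ : ℝ) (hc1 : 1 < c) (hc2 : c < 2) (hκ0 : 0 < κ) (hκ1 : κ < 1) :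
    ∃ C : ℝ, 0 < C ∧ ∀ (mu α X P Q : ℝ) (Dn : ℕ) (lam : ℕ → ℝ) (H : ℕ)
      (a b : ℕ → ℝ), α ≠ 0 → 1 ≤ X → (Dn : ℝ) ≤ X → 0 < P → (Dn : ℝ) ^ 2 ≤ P → 0 < Q →
      (∀ d, |lam d| ≤ 1) → (∀ d, 2 ∣ d → lam d = 0) → (∀ m, |a m| ≤ 1) → (∀ l, |b l| ≤ 1) →
      0 < H → (H : ℝ) ≤ Q →
      ‖BB c mu α X Dn lam (rng κ P) (rng κ Q) a b‖ ^ 2 ≤ C * (1 + Real.log X) ^ 3 *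
        ((P * Q) ^ 2 / H + (Dn : ℝ) ^ 2 * √|α| * √(H : ℝ) * (P * Q) ^ (1 + c / 2) * √Q +
          (P * Q) ^ (2 - c / 2) * √Q / (√|α| * √(H : ℝ))) := by
  obtain ⟨C, hC, hw⟩ := window_block c κ hc1 hc2 hκ0 hκ1
  refine ⟨4 * C, by positivity, ?_⟩
  intro mu α X P Q Dn lam H a b hα hX hD hP hDP hQ hl1 hl2 ha hb hH hHQ
  set L := 1 + Real.log X with hL
  have hL1 : 1 ≤ L := by rw [hL]; linarith [Real.log_nonneg hX]
  have hA : 0 < √|α| := Real.sqrt_pos.mpr (abs_pos.mpr hα)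
  refine (BB_windows c mu α X κ P Q Dn lam H hH hQ hHQ a b _ (fun J t hJ ht =>
    hw mu α X P Q Dn lam J t H a b hα hX hD hP hDP hQ hl1 hl2 ha hb hJ ht)).trans ?_
  rw [← hL]
  have hH' : (0 : ℝ) < H := by exact_mod_cast hH
  have hsH : 0 < √(H : ℝ) := Real.sqrt_pos.mpr hH'
  have hsq : √(H : ℝ) ^ 2 = H := Real.sq_sqrt hH'.le
  have p1 : P ^ (1 + c / 2) = P * P ^ (c / 2) := by rw [Real.rpow_add hP, Real.rpow_one]
  have p2 : P ^ (2 - c / 2) = P * P ^ (1 - c / 2) := by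
    rw [show 2 - c / 2 = 1 + (1 - c / 2) by ring, Real.rpow_add hP, Real.rpow_one]
  have q1 : Q ^ (1 + c / 2) * √Q = Q ^ 2 * Q ^ ((c - 1) / 2) := by
    rw [Real.sqrt_eq_rpow, ← Real.rpow_add hQ, ← Real.rpow_natCast, ← Real.rpow_add hQ]
    congr 1; push_cast; ring
  have q2 : Q ^ (2 - c / 2) * √Q = Q ^ 2 / Q ^ ((c - 1) / 2) := by
    rw [Real.sqrt_eq_rpow, ← Real.rpow_add hQ, ← Real.rpow_natCast, ← Real.rpow_sub hQ]
    congr 1; push_cast; ring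
  have t2 : (P * Q) ^ (1 + c / 2) * √Q = P * P ^ (c / 2) * (Q ^ 2 * Q ^ ((c - 1) / 2)) := by
    rw [Real.mul_rpow hP.le hQ.le, p1, mul_assoc, q1]
  have t3 : (P * Q) ^ (2 - c / 2) * √Q = P * P ^ (1 - c / 2) * (Q ^ 2 / Q ^ ((c - 1) / 2)) := by
    rw [Real.mul_rpow hP.le hQ.le, p2, mul_assoc, q2]
  rw [mul_assoc _ ((P * Q) ^ (1 + c / 2)), t2, t3]
  have hR : 0 < Q ^ ((c - 1) / 2) := Real.rpow_pos_of_pos hQ _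
  have hPc : 0 < P ^ (c / 2) := Real.rpow_pos_of_pos hP _
  have hPc' : 0 < P ^ (1 - c / 2) := Real.rpow_pos_of_pos hP _
  generalize Q ^ ((c - 1) / 2) = R at *
  generalize P ^ (c / 2) = P1 at *
  generalize P ^ (1 - c / 2) = P2 at *
  generalize √|α| = A at *
  generalize √(H : ℝ) = h at *
  rw [← hsq]
  have hL3 : 1 ≤ L ^ 3 := one_le_pow₀ hL1
  have hlast : (Dn : ℝ) ^ 2 * (A * R) * P1 * (h ^ 2 * h) ≤
      L ^ 3 * ((Dn : ℝ) ^ 2 * (A * R) * P1 * (h ^ 2 * h)) :=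
    le_mul_of_one_le_left (by positivity) hL3
  calc _ ≤ 4 * (Q / h ^ 2) ^ 2 * (C * (P * (h ^ 2 * (P * L ^ 3 +
        L ^ 3 * ((Dn : ℝ) ^ 2 * (A * R) * P1 * (h ^ 2 * h)) + L ^ 3 * (P2 / (A * R)) * h)))) := by
        gcongr
    _ = _ := by field_simp

/-! ### Type II sums: choice of the window length and dyadic decomposition -/

/-- The quantity bounding the Type II sums, with `A` in the role of `|α|`. -/
noncomputable def EII (c X A : ℝ) : ℝ :=
  X ^ ((5 : ℝ) / 6) + X ^ (53 / 48 - c / 6) * A ^ ((1 : ℝ) / 6) +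
    X ^ (1 - c / 4) * A ^ (-(1 : ℝ) / 4) + X ^ (113 / 96 - c / 3) * A ^ (-(1 : ℝ) / 6)

lemma two_mul_rpow_le (X p : ℝ) (hX : 0 < X) (hp : p ≤ 2) : (2 * X) ^ p ≤ 4 * X ^ p := by
  rw [Real.mul_rpow (by norm_num) hX.le]
  have : (2 : ℝ) ^ p ≤ 2 ^ (2 : ℝ) := Real.rpow_le_rpow_of_exponent_le (by norm_num) hp
  have h4 : (2 : ℝ) ^ (2 : ℝ) = 4 := by norm_num
  have h5 : 0 ≤ X ^ p := by positivity
  nlinarith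

lemma sq_mul_rpow {X r : ℝ} (hX : 0 < X) (hr : 0 < r) (p q : ℝ) :
    (X ^ p * r ^ q) ^ 2 = X ^ (2 * p) * r ^ (2 * q) := by
  rw [mul_pow, ← Real.rpow_natCast, ← Real.rpow_natCast, ← Real.rpow_mul hX.le,
    ← Real.rpow_mul hr.le]
  congr 2 <;> (push_cast; ring)

set_option maxHeartbeats 1000000 in
/-- The block estimate with the window length `H` taken as the smaller of `Q` and
`X ^ (c / 3 - 5 / 24) |α| ^ (-1 / 3)`. -/
lemma block_opt (c κ : ℝ) (hc1 : 1 < c) (hc2 : c < 17 / 16) (hκ0 : 0 < κ) (hκ1 : κ < 1) :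
    ∃ C : ℝ, 0 < C ∧ ∀ (mu α X P Q : ℝ) (Dn : ℕ) (lam : ℕ → ℝ)
      (a b : ℕ → ℝ), α ≠ 0 → 2 ≤ X → (Dn : ℝ) ≤ X ^ ((17 - 16 * c) / 32) → 0 < P → 0 < Q →
      P * Q = 2 * X → Q ≤ P → X ^ ((1 : ℝ) / 3) ≤ Q →
      1 ≤ X ^ (c / 3 - 5 / 24) * |α| ^ (-(1 : ℝ) / 3) →
      (∀ d, |lam d| ≤ 1) → (∀ d, 2 ∣ d → lam d = 0) → (∀ m, |a m| ≤ 1) → (∀ l, |b l| ≤ 1) →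
      ‖BB c mu α X Dn lam (rng κ P) (rng κ Q) a b‖ ≤ C * (1 + Real.log X) ^ 2 * EII c X |α| := by
  obtain ⟨C, hC, hblk⟩ := block_bound c κ hc1 (by linarith) hκ0 hκ1
  refine ⟨√(16 * C), Real.sqrt_pos.mpr (by positivity), ?_⟩
  intro mu α X P Q Dn lam a b hα hX hD hP hQ hPQ hQP hXQ hH0 hl1 hl2 ha hb
  have hX0 : 0 < X := by linarith
  have hX1 : 1 ≤ X := by linarith
  have hr : 0 < |α| := abs_pos.mpr hα
  set L := 1 + Real.log X with hL
  have hL1 : 1 ≤ L := by rw [hL]; linarith [Real.log_nonneg hX1]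
  have hD2 : (Dn : ℝ) ^ 2 ≤ X ^ ((17 - 16 * c) / 16) := by
    calc (Dn : ℝ) ^ 2 ≤ (X ^ ((17 - 16 * c) / 32)) ^ 2 := by gcongr
      _ = _ := by rw [← Real.rpow_natCast, ← Real.rpow_mul hX0.le]; congr 1; push_cast; ring
  have hDP : (Dn : ℝ) ^ 2 ≤ P := by
    refine hD2.trans (le_trans ?_ (hXQ.trans hQP))
    exact Real.rpow_le_rpow_of_exponent_le hX1 (by linarith)
  have hDX : (Dn : ℝ) ≤ X := by
    refine hD.trans ?_
    nth_rewrite 2 [← Real.rpow_one X]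
    exact Real.rpow_le_rpow_of_exponent_le hX1 (by linarith)
  set H0 := X ^ (c / 3 - 5 / 24) * |α| ^ (-(1 : ℝ) / 3) with hH0def
  have hQ1 : 1 ≤ Q := le_trans (Real.one_le_rpow hX1 (by norm_num)) hXQ
  set K := min Q H0 with hK
  have hK1 : 1 ≤ K := le_min hQ1 hH0
  set H := ⌊K⌋₊ with hHdef
  have hHK : (H : ℝ) ≤ K := Nat.floor_le (by linarith)
  have hHpos : 0 < H := Nat.floor_pos.mpr hK1
  have hH1 : (1 : ℝ) ≤ H := by exact_mod_cast hHpos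
  have hKH : K ≤ 2 * H := by
    have := Nat.lt_floor_add_one K
    rw [← hHdef] at this
    linarith
  have hmain := hblk mu α X P Q Dn lam H a b hα hX1 hDX hP hDP hQ hl1 hl2 ha hb hHpos
    (hHK.trans (min_le_left _ _))
  rw [hPQ, ← hL] at hmain
  set u1 := X ^ ((5 : ℝ) / 6) with hu1
  set u2 := X ^ (53 / 48 - c / 6) * |α| ^ ((1 : ℝ) / 6) with hu2
  set u3 := X ^ (1 - c / 4) * |α| ^ (-(1 : ℝ) / 4) with hu3
  set u4 := X ^ (113 / 96 - c / 3) * |α| ^ (-(1 : ℝ) / 6) with hu4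
  have p1 : 0 < u1 := by positivity
  have p2 : 0 < u2 := by positivity
  have p3 : 0 < u3 := by positivity
  have p4 : 0 < u4 := by positivity
  have hE : EII c X |α| = u1 + u2 + u3 + u4 := rfl
  have hH00 : 0 < H0 := by linarith
  -- the reciprocal of the window length
  have hinv : 1 / (H : ℝ) ≤ 2 * (1 / Q + 1 / H0) := by
    have h1 : 1 / (H : ℝ) ≤ 2 * (1 / K) := by
      rw [mul_one_div, div_le_div_iff₀ (by linarith) (by linarith)]; linarith
    have h2 : 1 / K ≤ 1 / Q + 1 / H0 := by
      have a1 : 0 < 1 / Q := by positivity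
      have a2 : 0 < 1 / H0 := by positivity
      rcases min_choice Q H0 with h | h
      · rw [hK, h]; linarith
      · rw [hK, h]; linarith
    linarith
  have hsqH0 : √H0 = X ^ (c / 6 - 5 / 48) * |α| ^ (-(1 : ℝ) / 6) := by
    rw [Real.sqrt_eq_iff_mul_self_eq (by positivity) (by positivity), ← pow_two,
      sq_mul_rpow hX0 hr, hH0def]
    congr 2 <;> ring
  have hsqQ : √Q ≤ 2 * X ^ ((1 : ℝ) / 4) := by
    have h1 : √Q ^ 4 ≤ (2 * X ^ ((1 : ℝ) / 4)) ^ 4 := by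
      have e1 : √Q ^ 4 = Q ^ 2 := by
        rw [show 4 = 2 * 2 by norm_num, pow_mul, Real.sq_sqrt hQ.le]
      have e2 : (X ^ ((1 : ℝ) / 4)) ^ 4 = X := by
        rw [← Real.rpow_natCast, ← Real.rpow_mul hX0.le]; norm_num
      rw [e1, mul_pow, e2]
      nlinarith
    exact le_of_pow_le_pow_left₀ (by norm_num) (by positivity) h1
  have t1 : (2 * X) ^ 2 / (H : ℝ) ≤ 8 * u1 ^ 2 + 8 * u2 ^ 2 := by
    have e1 : X ^ 2 * (1 / Q) ≤ u1 ^ 2 := by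
      have : u1 ^ 2 = X ^ 2 * (1 / X ^ ((1 : ℝ) / 3)) := by
        rw [one_div, ← Real.rpow_neg hX0.le, hu1, ← Real.rpow_natCast, ← Real.rpow_natCast,
          ← Real.rpow_mul hX0.le, ← Real.rpow_add hX0]
        congr 1; norm_num
      rw [this]
      gcongr
    have e2 : X ^ 2 * (1 / H0) = u2 ^ 2 := by
      rw [hu2, sq_mul_rpow hX0 hr, hH0def, one_div, mul_inv, ← Real.rpow_neg hX0.le,
        ← Real.rpow_neg hr.le, ← mul_assoc, ← Real.rpow_natCast, ← Real.rpow_add hX0]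
      congr 2
      · push_cast; ring
      · ring
    calc (2 * X) ^ 2 / (H : ℝ) = 4 * X ^ 2 * (1 / H) := by ring
      _ ≤ 4 * X ^ 2 * (2 * (1 / Q + 1 / H0)) := by gcongr
      _ = 8 * (X ^ 2 * (1 / Q)) + 8 * (X ^ 2 * (1 / H0)) := by ring
      _ ≤ _ := by linarith
  have t2 : (Dn : ℝ) ^ 2 * √|α| * √(H : ℝ) * (2 * X) ^ (1 + c / 2) * √Q ≤ 8 * u2 ^ 2 := by
    have hHs : √(H : ℝ) ≤ √H0 := Real.sqrt_le_sqrt (hHK.trans (min_le_right _ _))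
    rw [hsqH0] at hHs
    have h2X := two_mul_rpow_le X (1 + c / 2) hX0 (by linarith)
    calc _ ≤ X ^ ((17 - 16 * c) / 16) * √|α| * (X ^ (c / 6 - 5 / 48) * |α| ^ (-(1 : ℝ) / 6)) *
          (4 * X ^ (1 + c / 2)) * (2 * X ^ ((1 : ℝ) / 4)) := by gcongr
      _ = 8 * ((X ^ ((17 - 16 * c) / 16) * X ^ (c / 6 - 5 / 48) * X ^ (1 + c / 2) *
          X ^ ((1 : ℝ) / 4)) * (|α| ^ ((1 : ℝ) / 2) * |α| ^ (-(1 : ℝ) / 6))) := by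
          rw [Real.sqrt_eq_rpow]; ring
      _ = _ := by
          rw [hu2, sq_mul_rpow hX0 hr, ← Real.rpow_add hX0, ← Real.rpow_add hX0,
            ← Real.rpow_add hX0, ← Real.rpow_add hr]
          congr 3
          · ring
          · norm_num
  have t3 : (2 * X) ^ (2 - c / 2) * √Q / (√|α| * √(H : ℝ)) ≤ 8 * u3 ^ 2 + 16 * u4 ^ 2 := by
    have h2X := two_mul_rpow_le X (2 - c / 2) hX0 (by linarith)
    have hQH : √Q / √(H : ℝ) ≤ 2 * (1 + √Q / √H0) := by
      rw [← Real.sqrt_div hQ.le, ← Real.sqrt_div hQ.le]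
      apply Real.sqrt_le_iff.mpr
      refine ⟨by positivity, ?_⟩
      have hs : √(Q / H0) ^ 2 = Q / H0 := Real.sq_sqrt (by positivity)
      have hs0 : 0 ≤ √(Q / H0) := Real.sqrt_nonneg _
      calc Q / H = Q * (1 / H) := by ring
        _ ≤ Q * (2 * (1 / Q + 1 / H0)) := by gcongr
        _ = 2 * (1 + Q / H0) := by field_simp
        _ = 2 * (1 + √(Q / H0) ^ 2) := by rw [hs]
        _ ≤ _ := by
            generalize √(Q / H0) = s at hs0
            linarith [sq_nonneg s, show (2 * (1 + s)) ^ 2 = 4 + 8 * s + 4 * s ^ 2 by ring]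
    have hQH0 : √Q / √H0 ≤ 2 * (X ^ (17 / 48 - c / 6) * |α| ^ ((1 : ℝ) / 6)) := by
      rw [hsqH0]
      calc _ ≤ (2 * X ^ ((1 : ℝ) / 4)) / (X ^ (c / 6 - 5 / 48) * |α| ^ (-(1 : ℝ) / 6)) := by gcongr
        _ = 2 * ((X ^ ((1 : ℝ) / 4) * (X ^ (c / 6 - 5 / 48))⁻¹) * (|α| ^ (-(1 : ℝ) / 6))⁻¹) := by
            field_simp
        _ = _ := by
            rw [← Real.rpow_neg hX0.le, ← Real.rpow_neg hr.le, ← Real.rpow_add hX0]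
            congr 3
            · ring
            · ring
    calc _ = (2 * X) ^ (2 - c / 2) * (√|α|)⁻¹ * (√Q / √(H : ℝ)) := by
          rw [div_eq_mul_inv, mul_inv]; ring
      _ ≤ (4 * X ^ (2 - c / 2)) * (√|α|)⁻¹ *
          (2 * (1 + 2 * (X ^ (17 / 48 - c / 6) * |α| ^ ((1 : ℝ) / 6)))) := by
          gcongr
          exact hQH.trans (by gcongr)
      _ = 8 * (X ^ (2 - c / 2) * |α| ^ (-(1 / 2) : ℝ)) + 16 * ((X ^ (2 - c / 2) *
          X ^ (17 / 48 - c / 6)) * (|α| ^ (-(1 / 2) : ℝ) * |α| ^ ((1 : ℝ) / 6))) := by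
          rw [Real.sqrt_eq_rpow, Real.rpow_neg hr.le]; ring
      _ = _ := by
          rw [hu3, hu4, sq_mul_rpow hX0 hr, sq_mul_rpow hX0 hr, ← Real.rpow_add hX0,
            ← Real.rpow_add hr]
          congr 3
          · ring_nf
          · ring_nf
          · ring_nf
          · norm_num
  have hsum : (2 * X) ^ 2 / (H : ℝ) + (Dn : ℝ) ^ 2 * √|α| * √(H : ℝ) * (2 * X) ^ (1 + c / 2) * √Q +
      (2 * X) ^ (2 - c / 2) * √Q / (√|α| * √(H : ℝ)) ≤ 16 * (u1 + u2 + u3 + u4) ^ 2 := by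
    have : u1 ^ 2 + u2 ^ 2 + u3 ^ 2 + u4 ^ 2 ≤ (u1 + u2 + u3 + u4) ^ 2 := by
      have e1 := mul_pos p1 p2
      have e2 := mul_pos p1 p3
      have e3 := mul_pos p1 p4
      have e4 := mul_pos p2 p3
      have e5 := mul_pos p2 p4
      have e6 := mul_pos p3 p4
      linarith [show (u1 + u2 + u3 + u4) ^ 2 = u1 ^ 2 + u2 ^ 2 + u3 ^ 2 + u4 ^ 2 + 2 * (u1 * u2 +
        u1 * u3 + u1 * u4 + u2 * u3 + u2 * u4 + u3 * u4) by ring]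
    linarith [sq_nonneg u1, sq_nonneg u2, sq_nonneg u3, sq_nonneg u4]
  rw [hE]
  apply le_of_pow_le_pow_left₀ (n := 2) (by norm_num) (by positivity)
  refine hmain.trans ?_
  have hrhs : (√(16 * C) * L ^ 2 * (u1 + u2 + u3 + u4)) ^ 2 =
      16 * C * L ^ (2 * 2) * (u1 + u2 + u3 + u4) ^ 2 := by
    rw [mul_pow, mul_pow, Real.sq_sqrt (by positivity), ← pow_mul]
  rw [hrhs]
  have hL4 : L ^ 3 ≤ L ^ (2 * 2) := pow_le_pow_right₀ hL1 (by norm_num)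
  calc _ ≤ C * L ^ (2 * 2) * (16 * (u1 + u2 + u3 + u4) ^ 2) := by gcongr
    _ = _ := by ring

lemma EII_nonneg (c X A : ℝ) (hX : 0 ≤ X) (hA : 0 ≤ A) : 0 ≤ EII c X A := by
  unfold EII; positivity

lemma Wt_eq_zero {c mu α X : ℝ} {Dn : ℕ} {lam : ℕ → ℝ} {m l : ℕ}
    (h : ¬ (mu * X < (m : ℝ) * l ∧ (m : ℝ) * l ≤ X)) : Wt c mu α X Dn lam m l = 0 := by
  unfold Wt
  apply Finset.sum_eq_zero
  intro d _
  rw [if_neg]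
  exact fun hc => h ⟨hc.1, hc.2.1⟩

/-- Replacing the ranges of summation, when the kernel vanishes on the discarded pairs. -/
lemma BB_change (c mu α X : ℝ) (Dn : ℕ) (lam : ℕ → ℝ) (Ms Ls Rm Rl : Finset ℕ) (a b : ℕ → ℝ)
    (hM : Ms ⊆ Rm) (hL : Rl ⊆ Ls)
    (h0 : ∀ m ∈ Ms, ∀ l ∈ Ls, l ∉ Rl → Wt c mu α X Dn lam m l = 0) :
    BB c mu α X Dn lam Ms Ls a b =
      BB c mu α X Dn lam Rm Rl (fun m => if m ∈ Ms then a m else 0) b := by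
  unfold BB
  rw [← Finset.sum_subset hM]
  · apply Finset.sum_congr rfl
    intro m hm
    simp only [if_pos hm]
    congr 1
    symm
    apply Finset.sum_subset hL
    intro l hl hlr
    rw [h0 m hm l hl hlr, mul_zero]
  · intro m _ hm
    simp [hm]

lemma natLog_le {X : ℝ} (hX : 2 ≤ X) : ((Nat.log 2 ⌊X⌋₊ + 1 : ℕ) : ℝ) ≤ 2 * (1 + Real.log X) := by
  have h1 : 2 ^ Nat.log 2 ⌊X⌋₊ ≤ ⌊X⌋₊ :=
    Nat.pow_log_le_self 2 (Nat.floor_pos.mpr (by linarith)).ne'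
  have h2 : (2 : ℝ) ^ Nat.log 2 ⌊X⌋₊ ≤ X := by
    calc (2 : ℝ) ^ Nat.log 2 ⌊X⌋₊ ≤ ⌊X⌋₊ := by exact_mod_cast h1
      _ ≤ X := Nat.floor_le (by linarith)
  have h3 := Real.log_le_log (by positivity) h2
  rw [Real.log_pow] at h3
  have h4 := Real.log_two_gt_d9
  have h5 : (0 : ℝ) ≤ Nat.log 2 ⌊X⌋₊ := Nat.cast_nonneg _
  push_cast
  nlinarith

/-- The Type II estimate for coefficients bounded by `1`. The range of `m` is split dyadically; each
piece confines `l` to a range of the matching size, and the longer of the two variables takes the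
role of the first one in `block_opt`. -/
lemma typeII_norm (c mu : ℝ) (hc1 : 1 < c) (hc2 : c < 17 / 16) (hmu0 : 0 < mu) (hmu1 : mu < 1) :
    ∃ C : ℝ, 0 < C ∧ ∀ (α X : ℝ) (Dn : ℕ) (lam : ℕ → ℝ) (Ms : Finset ℕ)
      (a b : ℕ → ℝ), α ≠ 0 → 2 ≤ X → (Dn : ℝ) ≤ X ^ ((17 - 16 * c) / 32) →
      1 ≤ X ^ (c / 3 - 5 / 24) * |α| ^ (-(1 : ℝ) / 3) →
      (∀ d, |lam d| ≤ 1) → (∀ d, 2 ∣ d → lam d = 0) →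
      (∀ m ∈ Ms, X ^ ((1 : ℝ) / 3) ≤ m ∧ (m : ℝ) ≤ X ^ ((2 : ℝ) / 3)) →
      (∀ m, |a m| ≤ 1) → (∀ l, |b l| ≤ 1) →
      ‖BL c mu α X Dn lam Ms a b‖ ≤ C * (1 + Real.log X) ^ 3 * EII c X |α| := by
  obtain ⟨C, hC, hblk⟩ := block_opt c (mu / 4) hc1 hc2 (by positivity) (by linarith)
  refine ⟨2 * C, by positivity, ?_⟩
  intro α X Dn lam Ms a b hα hX hD hH0 hl1 hl2 hMs ha hb
  have hX0 : 0 < X := by linarith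
  have hX1 : 1 ≤ X := by linarith
  set L := 1 + Real.log X with hL
  have hL1 : 1 ≤ L := by rw [hL]; linarith [Real.log_nonneg hX1]
  have hE := EII_nonneg c X |α| hX0.le (abs_nonneg α)
  have hX13 : 1 ≤ X ^ ((1 : ℝ) / 3) := Real.one_le_rpow hX1 (by norm_num)
  have hX23 : X ^ ((2 : ℝ) / 3) ≤ X := by
    nth_rewrite 2 [← Real.rpow_one X]
    exact Real.rpow_le_rpow_of_exponent_le hX1 (by norm_num)
  have hprod : X ^ ((1 : ℝ) / 3) * X ^ ((2 : ℝ) / 3) = X := by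
    rw [← Real.rpow_add hX0]; norm_num
  set T := Finset.range (Nat.log 2 ⌊X⌋₊ + 1) with hT
  have hsplit : BL c mu α X Dn lam Ms a b = ∑ i ∈ T,
      BB c mu α X Dn lam (Ms.filter (fun m => Nat.log 2 m = i)) (Finset.Ioc 0 ⌊X⌋₊) a b := by
    rw [BL_eq_BB]
    unfold BB
    symm
    apply Finset.sum_fiberwise_of_maps_to
    intro m hm
    rw [hT, Finset.mem_range]
    exact Nat.lt_succ_of_le (Nat.log_mono_right (Nat.le_floor ((hMs m hm).2.trans hX23)))
  have hbl : ∀ i ∈ T, ‖BB c mu α X Dn lam (Ms.filter (fun m => Nat.log 2 m = i))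
      (Finset.Ioc 0 ⌊X⌋₊) a b‖ ≤ C * L ^ 2 * EII c X |α| := by
    intro i _
    set Mi := Ms.filter (fun m => Nat.log 2 m = i) with hMi
    rcases Finset.eq_empty_or_nonempty Mi with hemp | ⟨m₀, hm₀⟩
    · rw [hemp]
      simp only [BB, Finset.sum_empty, norm_zero]
      positivity
    set p : ℝ := 2 ^ i with hp
    have hp1 : 1 ≤ p := one_le_pow₀ (by norm_num)
    have hp0 : 0 < p := by linarith
    have hMi' : ∀ m ∈ Mi, p ≤ m ∧ (m : ℝ) < 2 * p ∧ X ^ ((1 : ℝ) / 3) ≤ m ∧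
        (m : ℝ) ≤ X ^ ((2 : ℝ) / 3) := by
      intro m hm
      obtain ⟨h1, h2⟩ := Finset.mem_filter.mp hm
      have h3 := hMs m h1
      have hm0 : m ≠ 0 := by
        rintro rfl
        have := h3.1
        simp only [Nat.cast_zero] at this
        linarith
      refine ⟨?_, ?_, h3⟩
      · have := Nat.pow_log_le_self 2 hm0
        rw [h2] at this
        rw [hp]; exact_mod_cast this
      · have := Nat.lt_pow_succ_log_self (b := 2) (by norm_num) m
        rw [h2] at this
        have h4 : (m : ℝ) < 2 ^ (i + 1) := by exact_mod_cast this
        rw [hp]; rw [pow_succ] at h4; linarith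
    set P := 2 * p with hP
    set Q := X / p with hQ
    have hP0 : 0 < P := by positivity
    have hQ0 : 0 < Q := by positivity
    have hPQ : P * Q = 2 * X := by rw [hP, hQ]; field_simp
    have hQX : Q ≤ X := div_le_self hX0.le hp1
    have hPlow : X ^ ((1 : ℝ) / 3) ≤ P := by
      have := hMi' m₀ hm₀; linarith
    have hQlow : X ^ ((1 : ℝ) / 3) ≤ Q := by
      have := hMi' m₀ hm₀
      rw [hQ, le_div_iff₀ hp0]
      calc _ ≤ X ^ ((1 : ℝ) / 3) * X ^ ((2 : ℝ) / 3) := by gcongr; linarith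
        _ = X := hprod
    rw [BB_change c mu α X Dn lam Mi (Finset.Ioc 0 ⌊X⌋₊) (rng (mu / 4) P) (rng (mu / 4) Q) a b]
    · have ha' : ∀ m, |(fun m => if m ∈ Mi then a m else 0) m| ≤ 1 := by
        intro m
        by_cases h : m ∈ Mi
        · simpa [h] using ha m
        · simp [h]
      rcases le_total Q P with h | h
      · exact hblk mu α X P Q Dn lam _ b hα hX hD hP0 hQ0 hPQ h hQlow hH0 hl1 hl2 ha' hb
      · rw [BB_symm]
        exact hblk mu α X Q P Dn lam b _ hα hX hD hQ0 hP0 (by rw [mul_comm, hPQ]) h hPlow hH0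
          hl1 hl2 hb ha'
    · intro m hm
      have h := hMi' m hm
      rw [mem_rng hP0.le]
      have hm0 : (0 : ℝ) < m := by linarith
      refine ⟨by exact_mod_cast hm0, h.2.1.le, ?_⟩
      rw [hP]; nlinarith
    · intro l hl
      rw [mem_rng hQ0.le] at hl
      rw [Finset.mem_Ioc]
      exact ⟨hl.1, Nat.le_floor (hl.2.1.trans hQX)⟩
    · intro m hm l hl hlr
      have h := hMi' m hm
      have hm0 : (0 : ℝ) < m := by linarith
      apply Wt_eq_zero
      rintro ⟨h1, h2⟩
      apply hlr
      rw [mem_rng hQ0.le]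
      have hl0 : (0 : ℝ) ≤ l := Nat.cast_nonneg l
      refine ⟨(Finset.mem_Ioc.mp hl).1, ?_, ?_⟩
      · rw [hQ, le_div_iff₀ hp0]; nlinarith
      · have h3 : mu * X < 2 * p * l := by nlinarith
        rw [hQ, mul_div_assoc', div_lt_iff₀ hp0]
        nlinarith
  rw [hsplit]
  calc _ ≤ ∑ i ∈ T, ‖BB c mu α X Dn lam (Ms.filter (fun m => Nat.log 2 m = i))
          (Finset.Ioc 0 ⌊X⌋₊) a b‖ := norm_sum_le _ _
    _ ≤ ∑ i ∈ T, C * L ^ 2 * EII c X |α| := Finset.sum_le_sum hbl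
    _ = ((Nat.log 2 ⌊X⌋₊ + 1 : ℕ) : ℝ) * (C * L ^ 2 * EII c X |α|) := by
        rw [Finset.sum_const, nsmul_eq_mul, hT, Finset.card_range]
    _ ≤ (2 * L) * (C * L ^ 2 * EII c X |α|) := by
        have := natLog_le hX
        gcongr
    _ = _ := by ring

/-- Bilinear sums with arbitrary bounded coefficients whose first variable lies between
`X ^ (1 / 3)` and `X ^ (2 / 3)`. -/
lemma typeII (c mu : ℝ) (hc1 : 1 < c) (hc2 : c < 17 / 16) (hmu0 : 0 < mu) (hmu1 : mu < 1) :
    ∃ C : ℝ, 0 < C ∧ ∀ (α X : ℝ) (Dn : ℕ) (lam : ℕ → ℝ) (Ms : Finset ℕ)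
      (a b : ℕ → ℝ) (A B : ℝ), α ≠ 0 → 2 ≤ X → (Dn : ℝ) ≤ X ^ ((17 - 16 * c) / 32) →
      1 ≤ X ^ (c / 3 - 5 / 24) * |α| ^ (-(1 : ℝ) / 3) →
      (∀ d, |lam d| ≤ 1) → (∀ d, 2 ∣ d → lam d = 0) →
      (∀ m ∈ Ms, X ^ ((1 : ℝ) / 3) ≤ m ∧ (m : ℝ) ≤ X ^ ((2 : ℝ) / 3)) →
      0 < A → 0 < B →
      (∀ m ∈ Ms, |a m| ≤ A) → (∀ l : ℕ, 0 < l → (l : ℝ) ≤ X → |b l| ≤ B) →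
      ‖BL c mu α X Dn lam Ms a b‖ ≤ C * (A * B) * ((1 + Real.log X) ^ 3 * EII c X |α|) := by
  obtain ⟨C, hC, h⟩ := typeII_norm c mu hc1 hc2 hmu0 hmu1
  refine ⟨C, hC, ?_⟩
  intro α X Dn lam Ms a b A B hα hX hD hH0 hl1 hl2 hMs hA hB ha hb
  have hX0 : 0 ≤ X := by linarith
  set a' : ℕ → ℝ := fun m => if m ∈ Ms then a m / A else 0 with ha'
  set b' : ℕ → ℝ := fun l => if l ∈ Finset.Ioc 0 ⌊X⌋₊ then b l / B else 0 with hb'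
  have heq : BL c mu α X Dn lam Ms a b = ((A * B : ℝ) : ℂ) * BL c mu α X Dn lam Ms a' b' := by
    unfold BL
    rw [Finset.mul_sum]
    apply Finset.sum_congr rfl; intro d _
    rw [mul_left_comm]
    congr 1
    rw [Finset.mul_sum]
    apply Finset.sum_congr rfl; intro m hm
    simp only [Finset.mul_sum]
    apply Finset.sum_congr rfl; intro l hl
    have hA' : (A : ℂ) ≠ 0 := by exact_mod_cast hA.ne'
    have hB' : (B : ℂ) ≠ 0 := by exact_mod_cast hB.ne'
    rw [ha', hb']
    simp only [if_pos hm, if_pos (mem_LS.mp hl).1]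
    push_cast
    field_simp
  rw [heq, norm_mul, Complex.norm_real, Real.norm_eq_abs, abs_of_pos (by positivity)]
  have := h α X Dn lam Ms a' b' hα hX hD hH0 hl1 hl2 hMs (by
    intro m
    simp only [ha']
    by_cases hm : m ∈ Ms
    · rw [if_pos hm, abs_div, abs_of_pos hA]
      exact (div_le_one hA).mpr (ha m hm)
    · simp [hm]) (by
    intro l
    simp only [hb']
    by_cases hl : l ∈ Finset.Ioc 0 ⌊X⌋₊
    · rw [if_pos hl, abs_div, abs_of_pos hB]
      rw [Finset.mem_Ioc, Nat.le_floor_iff hX0] at hl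
      exact (div_le_one hB).mpr (hb l hl.1 hl.2)
    · simp only [if_neg hl, abs_zero]; norm_num)
  calc _ ≤ A * B * (C * (1 + Real.log X) ^ 3 * EII c X |α|) := by gcongr
    _ = _ := by ring

/-! ### Vaughan's identity -/

/-- The sum `∑_d λ(d) ∑_n F(n) e(α n^c)` over `n ∈ (mu X, X]` with `n ≡ -2` modulo `d`; the set of
these `n` is `LS mu X d 1`. -/
noncomputable def TT (c mu α X : ℝ) (Dn : ℕ) (lam : ℕ → ℝ) (F : ℕ → ℝ) : ℂ :=
  ∑ d ∈ Finset.range (Dn + 1), (lam d : ℂ) *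
    ∑ n ∈ LS mu X d 1, (F n : ℂ) * e (α * (n : ℝ) ^ c)

lemma TT_add (c mu α X : ℝ) (Dn : ℕ) (lam : ℕ → ℝ) (F G : ℕ → ℝ) :
    TT c mu α X Dn lam (fun n => F n + G n) = TT c mu α X Dn lam F + TT c mu α X Dn lam G := by
  unfold TT
  rw [← Finset.sum_add_distrib]
  apply Finset.sum_congr rfl; intro d _
  rw [← mul_add, ← Finset.sum_add_distrib]
  congr 1
  apply Finset.sum_congr rfl; intro n _
  push_cast; ring

lemma TT_neg (c mu α X : ℝ) (Dn : ℕ) (lam : ℕ → ℝ) (F : ℕ → ℝ) :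
    TT c mu α X Dn lam (fun n => - F n) = - TT c mu α X Dn lam F := by
  unfold TT
  simp

/-- A Dirichlet convolution turns the linear sum into a bilinear one. -/
lemma TT_mul (c mu α X : ℝ) (Dn : ℕ) (lam : ℕ → ℝ) (f g : ArithmeticFunction ℝ) :
    TT c mu α X Dn lam (fun n => (f * g) n) =
      BL c mu α X Dn lam (Finset.Ioc 0 ⌊X⌋₊) (fun n => f n) (fun n => g n) := by
  classical
  unfold TT BL
  apply Finset.sum_congr rfl; intro d _
  congr 1
  set I := Finset.Ioc 0 ⌊X⌋₊ with hI
  set S := (I ×ˢ I).filter (fun p : ℕ × ℕ => Cond mu X d p.1 p.2) with hS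
  set G : ℕ × ℕ → ℂ := fun p => (f p.1 : ℂ) * ((g p.2 : ℂ) * e (α * ((p.1 : ℝ) * p.2) ^ c)) with hG
  have h1 : ∑ m ∈ I, (f m : ℂ) * ∑ l ∈ LS mu X d m, (g l : ℂ) * e (α * ((m : ℝ) * l) ^ c) =
      ∑ p ∈ S, G p := by
    rw [hS, Finset.sum_filter, Finset.sum_product]
    apply Finset.sum_congr rfl; intro m _
    rw [Finset.mul_sum, LS, Finset.sum_filter]
  have hmap : ∀ p ∈ S, p.1 * p.2 ∈ LS mu X d 1 := by
    intro p hp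
    rw [hS, Finset.mem_filter, Finset.mem_product] at hp
    obtain ⟨⟨hp1, hp2⟩, hc⟩ := hp
    rw [hI, Finset.mem_Ioc] at hp1 hp2
    rw [mem_LS, Finset.mem_Ioc]
    refine ⟨⟨Nat.mul_pos hp1.1 hp2.1, Nat.le_floor ?_⟩, ?_⟩
    · push_cast; exact hc.2.1
    · unfold Cond at *; push_cast
      simpa using hc
  rw [h1, ← Finset.sum_fiberwise_of_maps_to hmap]
  apply Finset.sum_congr rfl
  intro n hn
  rw [mem_LS, Finset.mem_Ioc] at hn
  have hfib : S.filter (fun p => p.1 * p.2 = n) = n.divisorsAntidiagonal := by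
    ext p
    rw [Finset.mem_filter, Nat.mem_divisorsAntidiagonal, hS, Finset.mem_filter, Finset.mem_product,
      hI, Finset.mem_Ioc, Finset.mem_Ioc]
    constructor
    · rintro ⟨_, h⟩
      exact ⟨h, by omega⟩
    · rintro ⟨h, h0⟩
      have hp1 : 0 < p.1 := Nat.pos_of_ne_zero (by rintro h'; rw [h'] at h; omega)
      have hp2 : 0 < p.2 := Nat.pos_of_ne_zero (by rintro h'; rw [h'] at h; omega)
      have l1 : p.1 ≤ n := h ▸ Nat.le_mul_of_pos_right _ hp2
      have l2 : p.2 ≤ n := h ▸ Nat.le_mul_of_pos_left _ hp1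
      refine ⟨⟨⟨⟨hp1, by omega⟩, ⟨hp2, by omega⟩⟩, ?_⟩, h⟩
      have hc := hn.2
      unfold Cond at *
      rw [← h] at hc
      push_cast at hc
      simpa using hc
  rw [hfib]
  simp only [ArithmeticFunction.mul_apply]
  push_cast
  rw [Finset.sum_mul]
  apply Finset.sum_congr rfl
  intro p hp
  rw [Nat.mem_divisorsAntidiagonal] at hp
  rw [hG, ← hp.1]
  push_cast; ring

lemma BL_restrict (c mu α X : ℝ) (Dn : ℕ) (lam : ℕ → ℝ) (Ms Ms' : Finset ℕ) (a b : ℕ → ℝ)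
    (hsub : Ms' ⊆ Ms) (h0 : ∀ m ∈ Ms, m ∉ Ms' → ∀ d, ∀ l ∈ LS mu X d m, a m = 0 ∨ b l = 0) :
    BL c mu α X Dn lam Ms a b = BL c mu α X Dn lam Ms' a b := by
  unfold BL
  apply Finset.sum_congr rfl; intro d _
  congr 1
  symm
  apply Finset.sum_subset hsub
  intro m hm hm'
  rw [Finset.mul_sum]
  apply Finset.sum_eq_zero
  intro l hl
  rcases h0 m hm hm' d l hl with h | h <;> simp [h]

lemma BL_union (c mu α X : ℝ) (Dn : ℕ) (lam : ℕ → ℝ) (M₁ M₂ : Finset ℕ) (a b : ℕ → ℝ)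
    (hdis : Disjoint M₁ M₂) :
    BL c mu α X Dn lam (M₁ ∪ M₂) a b = BL c mu α X Dn lam M₁ a b + BL c mu α X Dn lam M₂ a b := by
  unfold BL
  rw [← Finset.sum_add_distrib]
  apply Finset.sum_congr rfl; intro d _
  rw [← mul_add, Finset.sum_union hdis]

/-- The restriction of an arithmetic function to `n ≤ N`. -/
def trunc (f : ArithmeticFunction ℝ) (N : ℕ) : ArithmeticFunction ℝ :=
  ⟨fun n => if n ≤ N then f n else 0, by simp⟩

lemma trunc_apply (f : ArithmeticFunction ℝ) (N n : ℕ) :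
    trunc f N n = if n ≤ N then f n else 0 := rfl

/-- The Möbius function with real values. -/
noncomputable def moebR : ArithmeticFunction ℝ := (ArithmeticFunction.moebius : ArithmeticFunction ℝ)

/-- The constant function `1` with real values. -/
noncomputable def zetaR : ArithmeticFunction ℝ := (ArithmeticFunction.zeta : ArithmeticFunction ℝ)

lemma abs_moebR_le (n : ℕ) : |moebR n| ≤ 1 := by
  rw [moebR, ArithmeticFunction.intCoe_apply]
  exact_mod_cast ArithmeticFunction.abs_moebius_le_one

lemma zetaR_apply {n : ℕ} (h : 0 < n) : zetaR n = 1 := by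
  rw [zetaR, ArithmeticFunction.natCoe_apply, ArithmeticFunction.zeta_apply_ne h.ne']; simp

lemma abs_zetaR_le (n : ℕ) : |zetaR n| ≤ 1 := by
  rcases Nat.eq_zero_or_pos n with h | h
  · simp [h]
  · simp [zetaR_apply h]

/-- Vaughan's identity with both parameters equal to `N`: the Dirichlet series identity obtained by
expanding `(μ - μ_N) * (Λ - Λ_N) * 1`, where `μ * 1` is the unit and `Λ * 1 = log`. -/
lemma vaughan (N : ℕ) : (Λ : ArithmeticFunction ℝ) = trunc Λ N +
    trunc moebR N * ArithmeticFunction.log + -((trunc Λ N * trunc moebR N) * zetaR) +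
    (moebR - trunc moebR N) * ((Λ - trunc Λ N) * zetaR) := by
  have h1 : moebR * zetaR = 1 := ArithmeticFunction.coe_moebius_mul_coe_zeta
  have h2 : (Λ : ArithmeticFunction ℝ) * zetaR = ArithmeticFunction.log :=
    ArithmeticFunction.vonMangoldt_mul_zeta
  linear_combination (trunc Λ N - Λ) * h1 + (trunc moebR N) * h2

lemma conv_abs_le (f g : ArithmeticFunction ℝ) (hf : ∀ n, |f n| ≤ Λ n) (hg : ∀ n, |g n| ≤ 1)
    (n : ℕ) : |(f * g) n| ≤ Real.log n := by
  rw [ArithmeticFunction.mul_apply]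
  calc _ ≤ ∑ p ∈ n.divisorsAntidiagonal, |f p.1 * g p.2| := Finset.abs_sum_le_sum_abs _ _
    _ ≤ ∑ p ∈ n.divisorsAntidiagonal, Λ p.1 := by
        apply Finset.sum_le_sum; intro p _
        rw [abs_mul]
        calc _ ≤ Λ p.1 * 1 := mul_le_mul (hf _) (hg _) (abs_nonneg _)
              ArithmeticFunction.vonMangoldt_nonneg
          _ = _ := mul_one _
    _ = ∑ i ∈ n.divisors, Λ i := Nat.sum_divisorsAntidiagonal (fun i _ => Λ i)
    _ = _ := ArithmeticFunction.vonMangoldt_sum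

lemma trunc_vM_le (N n : ℕ) : |trunc Λ N n| ≤ Λ n := by
  rw [trunc_apply]
  split_ifs
  · rw [abs_of_nonneg ArithmeticFunction.vonMangoldt_nonneg]
  · simp

lemma sub_trunc_apply (f : ArithmeticFunction ℝ) (N n : ℕ) :
    (f - trunc f N) n = if n ≤ N then 0 else f n := by
  rw [sub_eq_add_neg, ArithmeticFunction.add_apply]
  change f n + -(trunc f N n) = _
  rw [trunc_apply]
  split_ifs <;> simp

lemma sub_trunc_vM_le (N n : ℕ) : |(Λ - trunc Λ N) n| ≤ Λ n := by
  rw [sub_trunc_apply]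
  split_ifs
  · simp
  · rw [abs_of_nonneg ArithmeticFunction.vonMangoldt_nonneg]

lemma trunc_moebR_le (N n : ℕ) : |trunc moebR N n| ≤ 1 := by
  rw [trunc_apply]
  split_ifs
  · exact abs_moebR_le n
  · simp

lemma sub_trunc_moebR_le (N n : ℕ) : |(moebR - trunc moebR N) n| ≤ 1 := by
  rw [sub_trunc_apply]
  split_ifs
  · simp
  · exact abs_moebR_le n

lemma trunc_conv_eq_zero (f g : ArithmeticFunction ℝ) (N n : ℕ) (h : N * N < n) :
    (trunc f N * trunc g N) n = 0 := by
  rw [ArithmeticFunction.mul_apply]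
  apply Finset.sum_eq_zero
  intro p hp
  rw [Nat.mem_divisorsAntidiagonal] at hp
  rw [trunc_apply, trunc_apply]
  by_cases h1 : p.1 ≤ N
  · by_cases h2 : p.2 ≤ N
    · have := Nat.mul_le_mul h1 h2
      omega
    · simp [h2]
  · simp [h1]

lemma sub_trunc_conv_eq_zero (f g : ArithmeticFunction ℝ) (N n : ℕ) (h : n ≤ N) :
    ((f - trunc f N) * g) n = 0 := by
  rw [ArithmeticFunction.mul_apply]
  apply Finset.sum_eq_zero
  intro p hp
  rw [Nat.mem_divisorsAntidiagonal] at hp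
  have : p.1 ≤ n := Nat.le_of_dvd (Nat.pos_of_ne_zero hp.2) ⟨p.2, hp.1.symm⟩
  rw [sub_trunc_apply, if_pos (this.trans h), zero_mul]

lemma tailBdd_zetaR (X : ℝ) : TailBdd X (fun n => zetaR n) 1 := by
  intro z K S hS h
  have h1 := tailBdd_one X z K S hS h
  have : ∑ l ∈ S, ((zetaR l : ℝ) : ℂ) * z l = ∑ l ∈ S, ((1 : ℝ) : ℂ) * z l := by
    apply Finset.sum_congr rfl
    intro l hl
    rw [zetaR_apply (hS l hl).1]
  rw [this]; exact h1

/-! ### Assembling the estimates -/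

lemma vM_le_logX {X : ℝ} {n : ℕ} (hn : 0 < n) (hnX : (n : ℝ) ≤ X) : Λ n ≤ Real.log X :=
  ArithmeticFunction.vonMangoldt_le_log.trans (Real.log_le_log (by exact_mod_cast hn) hnX)

lemma mem_LS_le {mu X : ℝ} (hX : 0 ≤ X) {d m l : ℕ} (h : l ∈ LS mu X d m) :
    0 < l ∧ (l : ℝ) ≤ X := by
  have := (mem_LS.mp h).1
  rwa [Finset.mem_Ioc, Nat.le_floor_iff hX] at this

/-- The contribution of the prime powers up to `N`, estimated trivially. -/
lemma TT_small (c mu α X : ℝ) (Dn N : ℕ) (lam : ℕ → ℝ) (hX : 1 ≤ X) (hl1 : ∀ d, |lam d| ≤ 1) :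
    ‖TT c mu α X Dn lam (fun n => trunc Λ N n)‖ ≤ (Dn + 1) * (N * Real.log X) := by
  have hlog : 0 ≤ Real.log X := Real.log_nonneg hX
  have hin : ∀ d, ‖∑ n ∈ LS mu X d 1, ((trunc Λ N n : ℝ) : ℂ) * e (α * (n : ℝ) ^ c)‖ ≤
      N * Real.log X := by
    intro d
    calc _ ≤ ∑ n ∈ LS mu X d 1, ‖((trunc Λ N n : ℝ) : ℂ) * e (α * (n : ℝ) ^ c)‖ := norm_sum_le _ _
      _ ≤ ∑ n ∈ LS mu X d 1, if n ≤ N then Real.log X else 0 := by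
          apply Finset.sum_le_sum
          intro n hn
          have h := mem_LS_le (by linarith) hn
          rw [norm_mul, norm_e, mul_one, Complex.norm_real, Real.norm_eq_abs, trunc_apply]
          split_ifs
          · rw [abs_of_nonneg ArithmeticFunction.vonMangoldt_nonneg]
            exact vM_le_logX h.1 h.2
          · simp
      _ = (((LS mu X d 1).filter (fun n => n ≤ N)).card : ℝ) * Real.log X := by
          rw [← Finset.sum_filter, Finset.sum_const, nsmul_eq_mul]
      _ ≤ N * Real.log X := by
          gcongr
          have : (LS mu X d 1).filter (fun n => n ≤ N) ⊆ Finset.Ioc 0 N := by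
            intro n hn
            rw [Finset.mem_filter] at hn
            exact Finset.mem_Ioc.mpr ⟨(mem_LS_le (by linarith) hn.1).1, hn.2⟩
          simpa using Finset.card_le_card this
  unfold TT
  calc _ ≤ ∑ d ∈ Finset.range (Dn + 1), ‖(lam d : ℂ) * ∑ n ∈ LS mu X d 1,
          ((trunc Λ N n : ℝ) : ℂ) * e (α * (n : ℝ) ^ c)‖ := norm_sum_le _ _
    _ ≤ ∑ d ∈ Finset.range (Dn + 1), N * Real.log X := by
        apply Finset.sum_le_sum
        intro d _
        rw [norm_mul, Complex.norm_real, Real.norm_eq_abs]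
        exact (mul_le_of_le_one_left (norm_nonneg _) (hl1 d)).trans (hin d)
    _ = _ := by simp

/-- The trivial bound for the whole sum. -/
lemma TT_trivial (c mu α X : ℝ) (Dn : ℕ) (lam : ℕ → ℝ) (hX : 1 ≤ X) (hD : (Dn : ℝ) ≤ X)
    (hl1 : ∀ d, |lam d| ≤ 1) (hl2 : ∀ d, 2 ∣ d → lam d = 0) :
    ‖TT c mu α X Dn lam (fun n => Λ n)‖ ≤ 2 * (1 + Real.log X) ^ 2 * X := by
  have hlog : 0 ≤ Real.log X := Real.log_nonneg hX
  have hX0 : 0 ≤ X := by linarith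
  have hin : ∀ d ∈ oddD Dn, ‖∑ n ∈ LS mu X d 1, ((Λ n : ℝ) : ℂ) * e (α * (n : ℝ) ^ c)‖ ≤
      2 * X * Real.log X * (1 / d) := by
    intro d hd
    obtain ⟨h0, h1, h2⟩ := mem_oddD hd
    have hd0 : (0 : ℝ) < d := by exact_mod_cast h0
    have hdX : (d : ℝ) ≤ X := le_trans (by exact_mod_cast h1) hD
    calc _ ≤ ∑ n ∈ LS mu X d 1, ‖((Λ n : ℝ) : ℂ) * e (α * (n : ℝ) ^ c)‖ := norm_sum_le _ _
      _ ≤ ∑ n ∈ LS mu X d 1, Real.log X := by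
          apply Finset.sum_le_sum
          intro n hn
          have h := mem_LS_le hX0 hn
          rw [norm_mul, norm_e, mul_one, Complex.norm_real, Real.norm_eq_abs,
            abs_of_nonneg ArithmeticFunction.vonMangoldt_nonneg]
          exact vM_le_logX h.1 h.2
      _ = ((LS mu X d 1).card : ℝ) * Real.log X := by rw [Finset.sum_const, nsmul_eq_mul]
      _ ≤ (X / d + 1) * Real.log X := by
          gcongr
          exact APset.card_le (LS_AP h2) h0 hX0 (fun x hx => (mem_LS_le hX0 hx).2)
      _ ≤ (X / d + X / d) * Real.log X := by
          have : 1 ≤ X / d := (one_le_div hd0).mpr hdX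
          gcongr
      _ = _ := by ring
  have hodd : TT c mu α X Dn lam (fun n => Λ n) = ∑ d ∈ oddD Dn, (lam d : ℂ) *
      ∑ n ∈ LS mu X d 1, ((Λ n : ℝ) : ℂ) * e (α * (n : ℝ) ^ c) := by
    unfold TT oddD
    symm
    apply Finset.sum_subset (Finset.filter_subset _ _)
    intro d hd hd'
    rw [Finset.mem_filter, not_and, not_not] at hd'
    simp [hl2 d (hd' hd)]
  rw [hodd]
  calc _ ≤ ∑ d ∈ oddD Dn, ‖(lam d : ℂ) * ∑ n ∈ LS mu X d 1,
          ((Λ n : ℝ) : ℂ) * e (α * (n : ℝ) ^ c)‖ := norm_sum_le _ _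
    _ ≤ ∑ d ∈ oddD Dn, 2 * X * Real.log X * (1 / d) := by
        apply Finset.sum_le_sum
        intro d hd
        rw [norm_mul, Complex.norm_real, Real.norm_eq_abs]
        exact (mul_le_of_le_one_left (norm_nonneg _) (hl1 d)).trans (hin d hd)
    _ = 2 * X * Real.log X * ∑ d ∈ oddD Dn, (1 : ℝ) / d := by rw [Finset.mul_sum]
    _ ≤ 2 * X * (1 + Real.log X) * (1 + Real.log X) := by
        have : ∑ d ∈ oddD Dn, (1 : ℝ) / d ≤ 1 + Real.log X := by
          apply sum_inv_le hX
          intro n hn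
          have := mem_oddD hn
          exact ⟨this.1, le_trans (by exact_mod_cast this.2.1) hD⟩
        have h3 : 0 ≤ ∑ d ∈ oddD Dn, (1 : ℝ) / d := Finset.sum_nonneg fun _ _ => by positivity
        gcongr
        linarith
    _ = _ := by ring

/-- When the window length `X ^ (c / 3 - 5 / 24) |α| ^ (-1 / 3)` is below `1`, the trivial bound
is already admissible. -/
lemma X_le_EII (c X A : ℝ) (hX : 0 < X) (hA : 0 < A)
    (h : X ^ (c / 3 - 5 / 24) * A ^ (-(1 : ℝ) / 3) < 1) : X ≤ EII c X A := by
  have h1 : X ^ (c / 6 - 5 / 48) * A ^ (-(1 : ℝ) / 6) ≤ 1 := by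
    have h2 := sq_mul_rpow hX hA (c / 6 - 5 / 48) (-(1 : ℝ) / 6)
    have h3 : X ^ (2 * (c / 6 - 5 / 48)) * A ^ (2 * (-(1 : ℝ) / 6)) =
        X ^ (c / 3 - 5 / 24) * A ^ (-(1 : ℝ) / 3) := by
      congr 2 <;> ring
    rw [h3] at h2
    have h4 : (X ^ (c / 6 - 5 / 48) * A ^ (-(1 : ℝ) / 6)) ^ 2 ≤ 1 ^ 2 := by rw [h2]; linarith
    exact le_of_pow_le_pow_left₀ (by norm_num) (by norm_num) h4
  have h5 : X = (X ^ (53 / 48 - c / 6) * A ^ ((1 : ℝ) / 6)) *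
      (X ^ (c / 6 - 5 / 48) * A ^ (-(1 : ℝ) / 6)) := by
    rw [mul_mul_mul_comm, ← Real.rpow_add hX, ← Real.rpow_add hA]
    have e1 : 53 / 48 - c / 6 + (c / 6 - 5 / 48) = 1 := by ring
    have e2 : (1 : ℝ) / 6 + -1 / 6 = 0 := by ring
    rw [e1, e2, Real.rpow_one, Real.rpow_zero, mul_one]
  have h6 : X ≤ X ^ (53 / 48 - c / 6) * A ^ ((1 : ℝ) / 6) := by
    nth_rewrite 1 [h5]
    exact mul_le_of_le_one_right (by positivity) h1
  unfold EII
  have : 0 ≤ X ^ ((5 : ℝ) / 6) := by positivity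
  have : 0 ≤ X ^ (1 - c / 4) * A ^ (-(1 : ℝ) / 4) := by positivity
  have : 0 ≤ X ^ (113 / 96 - c / 3) * A ^ (-(1 : ℝ) / 6) := by positivity
  linarith

/-- The combined estimate in terms of `|α|`, before inserting the bounds for `|α|`. -/
lemma main_raw (c mu : ℝ) (hc1 : 1 < c) (hc2 : c < 17 / 16) (hmu0 : 0 < mu) (hmu1 : mu < 1) :
    ∃ C : ℝ, 0 < C ∧ ∀ (α X : ℝ) (Dn : ℕ) (lam : ℕ → ℝ), α ≠ 0 → 2 ≤ X →
      (Dn : ℝ) ≤ X ^ ((17 - 16 * c) / 32) → (∀ d, |lam d| ≤ 1) → (∀ d, 2 ∣ d → lam d = 0) →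
      ‖TT c mu α X Dn lam (fun n => Λ n)‖ ≤ C * (1 + Real.log X) ^ 5 *
        (Dn * X ^ ((1 : ℝ) / 3) * (√|α| * X ^ (c / 2)) + X ^ (1 - c / 2) / √|α| +
          EII c X |α|) := by
  obtain ⟨C₁, hC₁, hI⟩ := typeI c mu hc1 (by linarith) hmu0 hmu1
  obtain ⟨C₂, hC₂, hII⟩ := typeII c mu hc1 hc2 hmu0 hmu1
  refine ⟨2 + 2 * C₁ + 2 * C₂, by positivity, ?_⟩
  intro α X Dn lam hα hX hD hl1 hl2
  have hX0 : 0 < X := by linarith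
  have hX1 : 1 ≤ X := by linarith
  have hr : 0 < |α| := abs_pos.mpr hα
  set L := 1 + Real.log X with hL
  have hlog : 0 < Real.log X := Real.log_pos (by linarith)
  have hL1 : 1 ≤ L := by rw [hL]; linarith
  have hlogL : Real.log X ≤ L := by rw [hL]; linarith
  have hDX3 : (Dn : ℝ) ≤ X ^ ((1 : ℝ) / 3) :=
    hD.trans (Real.rpow_le_rpow_of_exponent_le hX1 (by linarith))
  have hX3X : X ^ ((1 : ℝ) / 3) ≤ X := by
    nth_rewrite 2 [← Real.rpow_one X]
    exact Real.rpow_le_rpow_of_exponent_le hX1 (by norm_num)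
  have hDX : (Dn : ℝ) ≤ X := hDX3.trans hX3X
  have hE0 := EII_nonneg c X |α| hX0.le hr.le
  set E := EII c X |α| with hE
  set E1 := Dn * X ^ ((1 : ℝ) / 3) * (√|α| * X ^ (c / 2)) with hE1
  set E2 := X ^ (1 - c / 2) / √|α| with hE2
  have hE10 : 0 ≤ E1 := by positivity
  have hE20 : 0 ≤ E2 := by positivity
  have hpow : ∀ k, k ≤ 5 → L ^ k ≤ L ^ 5 := fun k hk => pow_le_pow_right₀ hL1 hk
  have hL50 : 0 < L ^ 5 := by positivity
  by_cases hH0 : X ^ (c / 3 - 5 / 24) * |α| ^ (-(1 : ℝ) / 3) < 1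
  · have h1 := TT_trivial c mu α X Dn lam hX1 hDX hl1 hl2
    have h2 := X_le_EII c X |α| hX0 hr hH0
    calc _ ≤ 2 * L ^ 2 * X := h1
      _ ≤ (2 + 2 * C₁ + 2 * C₂) * L ^ 5 * (E1 + E2 + E) := by
          have := hpow 2 (by norm_num)
          gcongr
          · linarith
          · linarith
  rw [not_lt] at hH0
  set N := ⌊X ^ ((1 : ℝ) / 3)⌋₊ with hN
  have hNle : (N : ℝ) ≤ X ^ ((1 : ℝ) / 3) := Nat.floor_le (by positivity)
  have hX13 : 1 ≤ X ^ ((1 : ℝ) / 3) := Real.one_le_rpow hX1 (by norm_num)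
  have hX23 : X ^ ((1 : ℝ) / 3) * X ^ ((1 : ℝ) / 3) = X ^ ((2 : ℝ) / 3) := by
    rw [← Real.rpow_add hX0]; norm_num
  have hX33 : X ^ ((1 : ℝ) / 3) * X ^ ((2 : ℝ) / 3) = X := by
    rw [← Real.rpow_add hX0]; norm_num
  have hX23X : X ^ ((2 : ℝ) / 3) ≤ X := by
    nth_rewrite 2 [← Real.rpow_one X]
    exact Real.rpow_le_rpow_of_exponent_le hX1 (by norm_num)
  have hNN : ((N * N : ℕ) : ℝ) ≤ X ^ ((2 : ℝ) / 3) := by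
    push_cast; rw [← hX23]; gcongr
  have hNX : N ≤ ⌊X⌋₊ := Nat.floor_le_floor hX3X
  have hNNX : N * N ≤ ⌊X⌋₊ := Nat.le_floor (hNN.trans hX23X)
  have hNbig : ∀ m : ℕ, N < m → X ^ ((1 : ℝ) / 3) ≤ m := fun m hm => (Nat.lt_of_floor_lt hm).le
  have hMsmall : ∀ m ∈ Finset.Ioc 0 N, 0 < m ∧ (m : ℝ) ≤ X ^ ((1 : ℝ) / 3) := by
    intro m hm
    rw [Finset.mem_Ioc] at hm
    exact ⟨hm.1, le_trans (by exact_mod_cast hm.2) hNle⟩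
  have hlogm : ∀ m : ℕ, (m : ℝ) ≤ X → Real.log m ≤ Real.log X := by
    intro m hm
    rcases Nat.eq_zero_or_pos m with h | h
    · simp [h, hlog.le]
    · exact Real.log_le_log (by exact_mod_cast h) hm
  have hdec : TT c mu α X Dn lam (fun n => Λ n) =
      TT c mu α X Dn lam (fun n => trunc Λ N n) +
      TT c mu α X Dn lam (fun n => (trunc moebR N * ArithmeticFunction.log) n) +
      -TT c mu α X Dn lam (fun n => ((trunc Λ N * trunc moebR N) * zetaR) n) +
      TT c mu α X Dn lam (fun n => ((moebR - trunc moebR N) * ((Λ - trunc Λ N) * zetaR)) n) := by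
    rw [← TT_neg, ← TT_add, ← TT_add, ← TT_add]
    congr 1
    funext n
    exact congrArg (fun f : ArithmeticFunction ℝ => f n) (vaughan N)
  have b1 : ‖TT c mu α X Dn lam (fun n => trunc Λ N n)‖ ≤ 2 * (L ^ 5 * E) := by
    refine (TT_small c mu α X Dn N lam hX1 hl1).trans ?_
    have h56 : X ^ ((2 : ℝ) / 3) ≤ E := by
      have h1 : X ^ ((2 : ℝ) / 3) ≤ X ^ ((5 : ℝ) / 6) :=
        Real.rpow_le_rpow_of_exponent_le hX1 (by norm_num)
      have a1 : 0 ≤ X ^ (53 / 48 - c / 6) * |α| ^ ((1 : ℝ) / 6) := by positivity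
      have a2 : 0 ≤ X ^ (1 - c / 4) * |α| ^ (-(1 : ℝ) / 4) := by positivity
      have a3 : 0 ≤ X ^ (113 / 96 - c / 3) * |α| ^ (-(1 : ℝ) / 6) := by positivity
      rw [hE, EII]; linarith
    calc _ ≤ (X ^ ((1 : ℝ) / 3) + X ^ ((1 : ℝ) / 3)) * (X ^ ((1 : ℝ) / 3) * L ^ 1) := by
          rw [pow_one]; gcongr
      _ = 2 * (L ^ 1 * X ^ ((2 : ℝ) / 3)) := by rw [← hX23]; ring
      _ ≤ _ := by
          have := hpow 1 (by norm_num)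
          gcongr
  have hI1 : ∀ K : ℝ, 0 ≤ K → K ≤ Real.log X → C₁ * K * (E1 + L ^ 2 * E2) ≤
      C₁ * (L ^ 5 * (E1 + E2)) := by
    intro K hK0 hK
    calc C₁ * K * (E1 + L ^ 2 * E2) ≤ C₁ * L * (L ^ 2 * E1 + L ^ 2 * E2) := by
          have : E1 ≤ L ^ 2 * E1 := le_mul_of_one_le_left hE10 (one_le_pow₀ hL1)
          have : K ≤ L := hK.trans hlogL
          gcongr
      _ = C₁ * (L ^ 3 * (E1 + E2)) := by ring
      _ ≤ _ := by
          have := hpow 3 (by norm_num)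
          gcongr
  have hII1 : ∀ K : ℝ, 0 ≤ K → K ≤ Real.log X → C₂ * K * (L ^ 3 * E) ≤ C₂ * (L ^ 5 * E) := by
    intro K hK0 hK
    calc C₂ * K * (L ^ 3 * E) ≤ C₂ * L * (L ^ 3 * E) := by
          have : K ≤ L := hK.trans hlogL
          gcongr
      _ = C₂ * (L ^ 4 * E) := by ring
      _ ≤ _ := by
          have := hpow 4 (by norm_num)
          gcongr
  have b2 : ‖TT c mu α X Dn lam (fun n => (trunc moebR N * ArithmeticFunction.log) n)‖ ≤
      C₁ * (L ^ 5 * (E1 + E2)) := by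
    rw [TT_mul, BL_restrict c mu α X Dn lam _ (Finset.Ioc 0 N)]
    · exact (hI X Dn lam α (Finset.Ioc 0 N) (fun n => trunc moebR N n)
        (fun n => ArithmeticFunction.log n) 1 (Real.log X) hX hDX3 hl1 hl2 hα hMsmall (by norm_num)
        (fun m _ => trunc_moebR_le N m) hlog.le (tailBdd_log X hX1)).trans
        (hI1 (1 * Real.log X) (by linarith) (by linarith))
    · exact Finset.Ioc_subset_Ioc_right hNX
    · intro m hm hm' d l _
      left
      rw [Finset.mem_Ioc] at hm hm'
      rw [trunc_apply, if_neg (by omega)]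
  have b3 : ‖TT c mu α X Dn lam (fun n => ((trunc Λ N * trunc moebR N) * zetaR) n)‖ ≤
      C₁ * (L ^ 5 * (E1 + E2)) + C₂ * (L ^ 5 * E) := by
    have hcoef : ∀ m : ℕ, (m : ℝ) ≤ X → |(trunc Λ N * trunc moebR N) m| ≤ Real.log X :=
      fun m hm => (conv_abs_le _ _ (trunc_vM_le N) (trunc_moebR_le N) m).trans (hlogm m hm)
    have hdis : Disjoint (Finset.Ioc 0 N) (Finset.Ioc N (N * N)) := by
      rw [Finset.disjoint_left]
      intro m h1 h2
      rw [Finset.mem_Ioc] at h1 h2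
      omega
    rw [TT_mul, BL_restrict c mu α X Dn lam _ (Finset.Ioc 0 N ∪ Finset.Ioc N (N * N)),
      BL_union _ _ _ _ _ _ _ _ _ _ hdis]
    · refine (norm_add_le _ _).trans (add_le_add ?_ ?_)
      · exact (hI X Dn lam α (Finset.Ioc 0 N) (fun n => (trunc Λ N * trunc moebR N) n)
          (fun n => zetaR n) (Real.log X) 1 hX hDX3 hl1 hl2 hα hMsmall hlog.le
          (fun m hm => hcoef m ((hMsmall m hm).2.trans hX3X)) (by norm_num)
          (tailBdd_zetaR X)).trans (hI1 (Real.log X * 1) (by linarith) (by linarith))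
      · have hM2 : ∀ m ∈ Finset.Ioc N (N * N), X ^ ((1 : ℝ) / 3) ≤ m ∧
            (m : ℝ) ≤ X ^ ((2 : ℝ) / 3) := by
          intro m hm
          rw [Finset.mem_Ioc] at hm
          exact ⟨hNbig m hm.1, le_trans (by exact_mod_cast hm.2) hNN⟩
        exact (hII α X Dn lam (Finset.Ioc N (N * N)) (fun n => (trunc Λ N * trunc moebR N) n)
          (fun n => zetaR n) (Real.log X) 1 hα hX hD hH0 hl1 hl2 hM2 hlog (by norm_num)
          (fun m hm => hcoef m ((hM2 m hm).2.trans hX23X)) (fun l _ _ => abs_zetaR_le l)).trans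
          (hII1 (Real.log X * 1) (by linarith) (by linarith))
    · intro m hm
      rw [Finset.mem_union, Finset.mem_Ioc, Finset.mem_Ioc] at hm
      rw [Finset.mem_Ioc]
      omega
    · intro m hm hm' d l _
      left
      rw [Finset.mem_union, Finset.mem_Ioc, Finset.mem_Ioc] at hm'
      rw [Finset.mem_Ioc] at hm
      exact trunc_conv_eq_zero _ _ N m (by omega)
  have b4 : ‖TT c mu α X Dn lam
      (fun n => ((moebR - trunc moebR N) * ((Λ - trunc Λ N) * zetaR)) n)‖ ≤ C₂ * (L ^ 5 * E) := by
    rw [TT_mul, BL_restrict c mu α X Dn lam _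
      ((Finset.Ioc 0 ⌊X⌋₊).filter (fun m : ℕ => X ^ ((1 : ℝ) / 3) ≤ m ∧
        (m : ℝ) ≤ X ^ ((2 : ℝ) / 3)))]
    · exact (hII α X Dn lam _ (fun n => (moebR - trunc moebR N) n)
        (fun n => ((Λ - trunc Λ N) * zetaR) n) 1 (Real.log X) hα hX hD hH0 hl1 hl2
        (fun m hm => (Finset.mem_filter.mp hm).2) (by norm_num) hlog
        (fun m _ => sub_trunc_moebR_le N m)
        (fun l _ hl => (conv_abs_le _ _ (sub_trunc_vM_le N) abs_zetaR_le l).trans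
          (hlogm l hl))).trans (hII1 (1 * Real.log X) (by linarith) (by linarith))
    · exact Finset.filter_subset _ _
    · intro m hm hm' d l hl
      by_cases h1 : m ≤ N
      · left; rw [sub_trunc_apply, if_pos h1]
      · right
        have h2 := hNbig m (by omega)
        have h3 : X ^ ((2 : ℝ) / 3) < m := by
          by_contra h4
          exact hm' (Finset.mem_filter.mpr ⟨hm, h2, not_lt.mp h4⟩)
        -- here `l < X ^ (1 / 3)`, where the second coefficient vanishes
        apply sub_trunc_conv_eq_zero
        apply Nat.le_floor
        have h5 := (mem_LS.mp hl).2.2.1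
        have h6 : (0 : ℝ) ≤ l := Nat.cast_nonneg l
        have h7 : 0 < X ^ ((2 : ℝ) / 3) := by positivity
        by_contra h8
        rw [not_le] at h8
        have h9 : X ^ ((1 : ℝ) / 3) * X ^ ((2 : ℝ) / 3) < l * m :=
          mul_lt_mul'' h8 h3 (by positivity) h7.le
        rw [hX33] at h9
        linarith [mul_comm (l : ℝ) m]
  rw [hdec]
  have hLE : 0 ≤ L ^ 5 * E := by positivity
  have hLE1 : 0 ≤ L ^ 5 * (E1 + E2) := by positivity
  have hn := norm_add₄_le (a := TT c mu α X Dn lam (fun n => trunc Λ N n))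
    (b := TT c mu α X Dn lam (fun n => (trunc moebR N * ArithmeticFunction.log) n))
    (c := -TT c mu α X Dn lam (fun n => ((trunc Λ N * trunc moebR N) * zetaR) n))
    (d := TT c mu α X Dn lam
      (fun n => ((moebR - trunc moebR N) * ((Λ - trunc Λ N) * zetaR)) n))
  rw [norm_neg] at hn
  refine hn.trans ((add_le_add (add_le_add (add_le_add b1 b2) b3) b4).trans ?_)
  have h1 : 0 ≤ C₁ * (L ^ 5 * E) := by positivity
  have h2 : 0 ≤ C₂ * (L ^ 5 * (E1 + E2)) := by positivity
  calc _ = 2 * (L ^ 5 * E) + 2 * (C₁ * (L ^ 5 * (E1 + E2))) + 2 * (C₂ * (L ^ 5 * E)) := by ring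
    _ ≤ 2 * (L ^ 5 * E) + 2 * (C₁ * (L ^ 5 * (E1 + E2))) + 2 * (C₂ * (L ^ 5 * E)) +
        (2 * (L ^ 5 * (E1 + E2)) + 2 * (C₁ * (L ^ 5 * E)) + 2 * (C₂ * (L ^ 5 * (E1 + E2)))) := by
        linarith
    _ = _ := by ring

/-! ### Inserting the bounds for `α` -/

lemma one_add_log_pow_le {ε X : ℝ} (hε : 0 < ε) (hX : 2 ≤ X) :
    (1 + Real.log X) ^ 5 ≤ (1 + 5 / ε) ^ 5 * X ^ ε := by
  have hX0 : 0 < X := by linarith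
  have h1 : Real.log X ≤ X ^ (ε / 5) / (ε / 5) := Real.log_le_rpow_div hX0.le (by positivity)
  have h2 : 1 ≤ X ^ (ε / 5) := Real.one_le_rpow (by linarith) (by positivity)
  have h3 : 1 + Real.log X ≤ (1 + 5 / ε) * X ^ (ε / 5) := by
    have : X ^ (ε / 5) / (ε / 5) = 5 / ε * X ^ (ε / 5) := by field_simp
    rw [this] at h1
    linarith
  have h0 : 0 ≤ Real.log X := Real.log_nonneg (by linarith)
  calc (1 + Real.log X) ^ 5 ≤ ((1 + 5 / ε) * X ^ (ε / 5)) ^ 5 :=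
        pow_le_pow_left₀ (by linarith) h3 5
    _ = (1 + 5 / ε) ^ 5 * X ^ ε := by
        rw [mul_pow, ← Real.rpow_natCast (X ^ (ε / 5)), ← Real.rpow_mul hX0.le]
        congr 2; push_cast; ring

lemma rpow_le_of_le_add_one {A M p : ℝ} (hA : 0 ≤ A) (hM : 3 ≤ M) (hAM : A ≤ M + 1)
    (hp0 : 0 ≤ p) (hp1 : p ≤ 1) : A ^ p ≤ 2 * M ^ p := by
  have h1 : A ^ p ≤ (2 * M) ^ p := Real.rpow_le_rpow hA (by linarith) hp0
  rw [Real.mul_rpow (by norm_num) (by linarith)] at h1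
  have h2 : (2 : ℝ) ^ p ≤ 2 := by
    calc (2 : ℝ) ^ p ≤ 2 ^ (1 : ℝ) := Real.rpow_le_rpow_of_exponent_le (by norm_num) hp1
      _ = 2 := Real.rpow_one 2
  have h3 : 0 ≤ M ^ p := Real.rpow_nonneg (by linarith) p
  exact h1.trans (mul_le_mul_of_nonneg_right h2 h3)

theorem stmt_8 (c mu ε : ℝ) (hc1 : 1 < c) (hc2 : c < 17 / 16) (hmu1 : 0 < mu) (hmu2 : mu < 1)
    (hε : 0 < ε) :
    ∃ C : ℝ, 0 < C ∧
      ∀ X : ℝ, 2 ≤ X →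
        ∀ M : ℝ, 3 ≤ M →
          ∀ lam : ℕ → ℝ, IsSieveWeight (X ^ ((17 - 16 * c) / 32)) lam →
            ∀ α : ℝ, X ^ ((16 * c - 5) / 32 - c) ≤ |α| → |α| ≤ M + 1 →
              ‖∑ d ∈ Finset.range (⌊X ^ ((17 - 16 * c) / 32)⌋₊ + 1), (lam d : ℂ) *
                  ∑ n ∈ (Finset.range (⌊X⌋₊ + 1)).filter
                      (fun n : ℕ => mu * X < (n : ℝ) ∧ d ∣ (n + 2)),
                    (Λ n : ℂ) * e (α * (n : ℝ) ^ c)‖ ≤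
                C * X ^ ε *
                  (X ^ (1 / 3 + c / 2) * X ^ ((17 - 16 * c) / 32) * M ^ ((1 : ℝ) / 2) +
                    X ^ (1 - c / 2) * (X ^ ((16 * c - 5) / 32 - c)) ^ (-(1 : ℝ) / 2) +
                    X ^ (3 / 4 + c / 6) * (X ^ ((17 - 16 * c) / 32)) ^ ((2 : ℝ) / 3) *
                      M ^ ((1 : ℝ) / 6) +
                    X ^ ((5 : ℝ) / 6) +
                    X ^ (1 - c / 6) * (X ^ ((17 - 16 * c) / 32)) ^ ((1 : ℝ) / 3) *
                      (X ^ ((16 * c - 5) / 32 - c)) ^ (-(1 : ℝ) / 6) +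
                    X ^ (1 - c / 4) * (X ^ ((16 * c - 5) / 32 - c)) ^ (-(1 : ℝ) / 4)) := by
  obtain ⟨C, hC, hmain⟩ := main_raw c mu hc1 hc2 hmu1 hmu2
  refine ⟨2 * C * (1 + 5 / ε) ^ 5, by positivity, ?_⟩
  intro X hX M hM lam hlam α hα1 hα2
  have hX0 : 0 < X := by linarith
  have hΔ : 0 < X ^ ((16 * c - 5) / 32 - c) := Real.rpow_pos_of_pos hX0 _
  have hA : 0 < |α| := hΔ.trans_le hα1
  have hDn : ((⌊X ^ ((17 - 16 * c) / 32)⌋₊ : ℕ) : ℝ) ≤ X ^ ((17 - 16 * c) / 32) :=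
    Nat.floor_le (by positivity)
  have hraw := hmain α X ⌊X ^ ((17 - 16 * c) / 32)⌋₊ lam (abs_pos.mp hA) hX hDn hlam.1
    (fun d hd => hlam.2 d (Or.inr (Or.inl hd)))
  have hset : ∀ d : ℕ, (Finset.range (⌊X⌋₊ + 1)).filter
      (fun n : ℕ => mu * X < (n : ℝ) ∧ d ∣ (n + 2)) = LS mu X d 1 := by
    intro d
    ext n
    rw [mem_LS, Finset.mem_filter, Finset.mem_range, Finset.mem_Ioc]
    unfold Cond
    rw [Nat.cast_one, one_mul, one_mul]
    constructor
    · rintro ⟨h1, h2, h3⟩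
      have hn : (0 : ℝ) < n := lt_trans (by positivity) h2
      have hn' : n ≤ ⌊X⌋₊ := by omega
      exact ⟨⟨by exact_mod_cast hn, hn'⟩, h2, (Nat.le_floor_iff hX0.le).mp hn', h3⟩
    · rintro ⟨⟨_, h1⟩, h2, _, h3⟩
      exact ⟨by omega, h2, h3⟩
  have hTT : ∑ d ∈ Finset.range (⌊X ^ ((17 - 16 * c) / 32)⌋₊ + 1), (lam d : ℂ) *
      ∑ n ∈ (Finset.range (⌊X⌋₊ + 1)).filter (fun n : ℕ => mu * X < (n : ℝ) ∧ d ∣ (n + 2)),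
        (Λ n : ℂ) * e (α * (n : ℝ) ^ c) =
      TT c mu α X ⌊X ^ ((17 - 16 * c) / 32)⌋₊ lam (fun n => Λ n) := by
    unfold TT
    simp only [hset]
  rw [hTT]
  refine hraw.trans ?_
  have hneg : ∀ p : ℝ, p ≤ 0 → |α| ^ p ≤ (X ^ ((16 * c - 5) / 32 - c)) ^ p :=
    fun p hp => Real.rpow_le_rpow_of_nonpos hΔ hα1 hp
  have hM0 : 0 < M := by linarith
  have t1 : (⌊X ^ ((17 - 16 * c) / 32)⌋₊ : ℝ) * X ^ ((1 : ℝ) / 3) * (√|α| * X ^ (c / 2)) ≤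
      2 * (X ^ (1 / 3 + c / 2) * X ^ ((17 - 16 * c) / 32) * M ^ ((1 : ℝ) / 2)) := by
    have hs : √|α| ≤ 2 * M ^ ((1 : ℝ) / 2) := by
      rw [Real.sqrt_eq_rpow]
      exact rpow_le_of_le_add_one hA.le hM hα2 (by norm_num) (by norm_num)
    calc (⌊X ^ ((17 - 16 * c) / 32)⌋₊ : ℝ) * X ^ ((1 : ℝ) / 3) * (√|α| * X ^ (c / 2))
        ≤ X ^ ((17 - 16 * c) / 32) * X ^ ((1 : ℝ) / 3) *
            (2 * M ^ ((1 : ℝ) / 2) * X ^ (c / 2)) := by gcongr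
      _ = _ := by rw [Real.rpow_add hX0]; ring
  have t2 : X ^ (1 - c / 2) / √|α| ≤
      X ^ (1 - c / 2) * (X ^ ((16 * c - 5) / 32 - c)) ^ (-(1 : ℝ) / 2) := by
    rw [Real.sqrt_eq_rpow, div_eq_mul_inv, ← Real.rpow_neg hA.le,
      show -((1 : ℝ) / 2) = -(1 : ℝ) / 2 by ring]
    exact mul_le_mul_of_nonneg_left (hneg _ (by norm_num)) (by positivity)
  have t3 : X ^ (53 / 48 - c / 6) * |α| ^ ((1 : ℝ) / 6) ≤
      2 * (X ^ (3 / 4 + c / 6) * (X ^ ((17 - 16 * c) / 32)) ^ ((2 : ℝ) / 3) *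
        M ^ ((1 : ℝ) / 6)) := by
    have hs := rpow_le_of_le_add_one (p := (1 : ℝ) / 6) hA.le hM hα2 (by norm_num) (by norm_num)
    rw [← Real.rpow_mul hX0.le, ← Real.rpow_add hX0,
      show 3 / 4 + c / 6 + (17 - 16 * c) / 32 * ((2 : ℝ) / 3) = 53 / 48 - c / 6 by ring]
    calc _ ≤ X ^ (53 / 48 - c / 6) * (2 * M ^ ((1 : ℝ) / 6)) := by gcongr
      _ = _ := by ring
  have t4 : X ^ (113 / 96 - c / 3) * |α| ^ (-(1 : ℝ) / 6) ≤
      X ^ (1 - c / 6) * (X ^ ((17 - 16 * c) / 32)) ^ ((1 : ℝ) / 3) *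
        (X ^ ((16 * c - 5) / 32 - c)) ^ (-(1 : ℝ) / 6) := by
    rw [← Real.rpow_mul hX0.le (y := (17 - 16 * c) / 32), ← Real.rpow_add hX0,
      show 1 - c / 6 + (17 - 16 * c) / 32 * ((1 : ℝ) / 3) = 113 / 96 - c / 3 by ring]
    exact mul_le_mul_of_nonneg_left (hneg _ (by norm_num)) (by positivity)
  have t5 : X ^ (1 - c / 4) * |α| ^ (-(1 : ℝ) / 4) ≤
      X ^ (1 - c / 4) * (X ^ ((16 * c - 5) / 32 - c)) ^ (-(1 : ℝ) / 4) :=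
    mul_le_mul_of_nonneg_left (hneg _ (by norm_num)) (by positivity)
  have hlog := one_add_log_pow_le hε hX
  have hlog0 : 0 ≤ Real.log X := Real.log_nonneg (by linarith)
  have p2 : 0 ≤ X ^ (1 - c / 2) * (X ^ ((16 * c - 5) / 32 - c)) ^ (-(1 : ℝ) / 2) := by positivity
  have p4 : 0 ≤ X ^ (1 - c / 6) * (X ^ ((17 - 16 * c) / 32)) ^ ((1 : ℝ) / 3) *
        (X ^ ((16 * c - 5) / 32 - c)) ^ (-(1 : ℝ) / 6) := by positivity
  have p5 : 0 ≤ X ^ (1 - c / 4) * (X ^ ((16 * c - 5) / 32 - c)) ^ (-(1 : ℝ) / 4) := by positivity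
  have p6 : 0 ≤ X ^ ((5 : ℝ) / 6) := by positivity
  have hE0 := EII_nonneg c X |α| hX0.le hA.le
  set S := X ^ (1 / 3 + c / 2) * X ^ ((17 - 16 * c) / 32) * M ^ ((1 : ℝ) / 2) +
                    X ^ (1 - c / 2) * (X ^ ((16 * c - 5) / 32 - c)) ^ (-(1 : ℝ) / 2) +
                    X ^ (3 / 4 + c / 6) * (X ^ ((17 - 16 * c) / 32)) ^ ((2 : ℝ) / 3) *
                      M ^ ((1 : ℝ) / 6) +
                    X ^ ((5 : ℝ) / 6) +
                    X ^ (1 - c / 6) * (X ^ ((17 - 16 * c) / 32)) ^ ((1 : ℝ) / 3) *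
                      (X ^ ((16 * c - 5) / 32 - c)) ^ (-(1 : ℝ) / 6) +
                    X ^ (1 - c / 4) * (X ^ ((16 * c - 5) / 32 - c)) ^ (-(1 : ℝ) / 4) with hS
  have hsum : (⌊X ^ ((17 - 16 * c) / 32)⌋₊ : ℝ) * X ^ ((1 : ℝ) / 3) * (√|α| * X ^ (c / 2)) +
      X ^ (1 - c / 2) / √|α| + EII c X |α| ≤ 2 * S := by
    unfold EII
    rw [hS]
    linarith
  calc _ ≤ C * ((1 + 5 / ε) ^ 5 * X ^ ε) * (2 * S) := by
        refine mul_le_mul (mul_le_mul_of_nonneg_left hlog hC.le) hsum ?_ (by positivity)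
        positivity
    _ = _ := by ring
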